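/- arXiv:2103.10288 — 10 statements merged into one kernel-verified Lean document; each statement's English description precedes it below -/
import Mathlib

section
/- Let E and F be Banach spaces such that the pair (E, F) has the weak maximizing property, and let F₁ be a closed subspace of F. Then the pair (E, F₁) also has the weak maximizing property. -/
open Filter Topology

/-- `x` is a maximizing sequence for the bounded operator `T`: a sequence of unit
vectors with `‖T (x n)‖ → ‖T‖`. -/
def MaximizingSeq {E F : Type*} [NormedAddCommGroup E] [NormedSpace ℝ E]
    [NormedAddCommGroup F] [NormedSpace ℝ F] (T : E →L[ℝ] F) (x : ℕ → E) : Prop :=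
  (∀ n, ‖x n‖ = 1) ∧ Tendsto (fun n => ‖T (x n)‖) atTop (𝓝 ‖T‖)

/-- `x` converges to `0` in the weak topology of `E`. -/
def WeaklyNull {E : Type*} [NormedAddCommGroup E] [NormedSpace ℝ E] (x : ℕ → E) : Prop :=
  ∀ f : E →L[ℝ] ℝ, Tendsto (fun n => f (x n)) atTop (𝓝 0)

/-- `T` attains its norm. -/
def AttainsNorm {E F : Type*} [NormedAddCommGroup E] [NormedSpace ℝ E]
    [NormedAddCommGroup F] [NormedSpace ℝ F] (T : E →L[ℝ] F) : Prop :=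
  ∃ x : E, ‖x‖ = 1 ∧ ‖T x‖ = ‖T‖

/-- The pair `(E, F)` has the weak maximizing property: every bounded linear operator
`T : E → F` admitting a maximizing sequence that does not converge weakly to `0`
attains its norm. -/
def WMP (E F : Type*) [NormedAddCommGroup E] [NormedSpace ℝ E]
    [NormedAddCommGroup F] [NormedSpace ℝ F] : Prop :=
  ∀ T : E →L[ℝ] F, (∃ x : ℕ → E, MaximizingSeq T x ∧ ¬ WeaklyNull x) → AttainsNorm T

theorem statement2 {E F : Type*}
    [NormedAddCommGroup E] [NormedSpace ℝ E] [CompleteSpace E]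
    [NormedAddCommGroup F] [NormedSpace ℝ F] [CompleteSpace F]
    (F₁ : Submodule ℝ F) (hF₁ : IsClosed (F₁ : Set F))
    (h : WMP E F) : WMP E F₁ := by
  rintro T ⟨x, ⟨hx, hT⟩, hw⟩
  -- Composing with the isometric inclusion `F₁ → F` changes neither `‖T‖` nor any `‖T y‖`.
  have hn : ‖F₁.subtypeL.comp T‖ = ‖T‖ := F₁.subtypeₗᵢ.norm_toContinuousLinearMap_comp
  obtain ⟨y, hy, hTy⟩ := h (F₁.subtypeL.comp T) ⟨x, ⟨hx, by rw [hn]; exact hT⟩, hw⟩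
  exact ⟨y, hy, by rw [← hn, ← hTy]; rfl⟩
end

section
/- Let E and F be Banach spaces such that the pair (E, F) has the weak maximizing property, and let E₁ be a closed subspace of E. Then the pair (E/E₁, F), where E/E₁ is the quotient Banach space with the quotient norm, also has the weak maximizing property. -/
/-!
Let `π : E → E ⧸ E₁` be the quotient map and `x` a maximizing, not weakly null sequence for
`T : E ⧸ E₁ → F`. Lift `x n` to `y n` with `1 ≤ ‖y n‖ < 1 + 1 / (n + 1)` and put
`z n = y n / ‖y n‖`. Since `‖y n‖ → 1`, the vectors `π (z n) = x n / ‖y n‖` behave like `x n`: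
this gives `‖T ∘ π‖ = ‖T‖`, that `z` is maximizing for `T ∘ π`, and that `z` is not weakly null
(test against `f ∘ π`). By hypothesis `T ∘ π` attains its norm at a unit vector `v`; as
`‖π v‖ ≤ 1`, the operator `T` attains its norm at `π v`, which must have norm one unless `T = 0`.
-/

open Filter Topology

theorem statement3 {E F : Type*}
    [NormedAddCommGroup E] [NormedSpace ℝ E] [CompleteSpace E]
    [NormedAddCommGroup F] [NormedSpace ℝ F] [CompleteSpace F]
    (E₁ : Submodule ℝ E) [IsClosed (E₁ : Set E)]
    (h : WMP E F) : WMP (E ⧸ E₁) F := by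
  rintro T ⟨x, ⟨hx1, hxT⟩, hxw⟩
  set π : E →L[ℝ] E ⧸ E₁ := E₁.mkQL with hπ
  have hπle : ∀ y, ‖π y‖ ≤ ‖y‖ := fun y => Submodule.Quotient.norm_mk_le E₁ y
  have hlift : ∀ n : ℕ, ∃ y : E, π y = x n ∧ ‖y‖ < ‖x n‖ + 1 / ((n : ℝ) + 1) := fun n =>
    Submodule.Quotient.norm_mk_lt (x n) (by positivity)
  choose y hyx hylt using hlift
  have hy1 : ∀ n, 1 ≤ ‖y n‖ := fun n => by
    have := hπle (y n)
    rwa [hyx, hx1] at this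
  have hy0 : ∀ n, ‖y n‖ ≠ 0 := fun n => by linarith [hy1 n]
  have hylim : Tendsto (fun n => ‖y n‖) atTop (𝓝 1) := by
    have hub : Tendsto (fun n : ℕ => 1 + 1 / ((n : ℝ) + 1)) atTop (𝓝 1) := by
      simpa using tendsto_one_div_add_atTop_nhds_zero_nat.const_add (1 : ℝ)
    refine tendsto_of_tendsto_of_tendsto_of_le_of_le tendsto_const_nhds hub hy1 fun n => ?_
    have := hylt n
    rw [hx1] at this
    exact this.le
  have hinv : Tendsto (fun n => ‖y n‖⁻¹) atTop (𝓝 1) := by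
    simpa using hylim.inv₀ one_ne_zero
  let z : ℕ → E := fun n => ‖y n‖⁻¹ • y n
  have hz1 : ∀ n, ‖z n‖ = 1 := fun n => by
    simp [z, norm_smul, hy0 n]
  have hπz : ∀ n, π (z n) = ‖y n‖⁻¹ • x n := fun n => by
    simp only [z, map_smul, hyx]
  have hSz : Tendsto (fun n => ‖T.comp π (z n)‖) atTop (𝓝 ‖T‖) := by
    have := hinv.mul hxT
    rw [one_mul] at this
    refine this.congr fun n => ?_
    rw [ContinuousLinearMap.comp_apply, hπz, map_smul, norm_smul, norm_inv, norm_norm]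
  have hS : ‖T.comp π‖ = ‖T‖ := by
    refine le_antisymm ?_ ?_
    · refine ContinuousLinearMap.opNorm_le_bound _ (norm_nonneg _) fun v => ?_
      exact (T.le_opNorm _).trans (mul_le_mul_of_nonneg_left (hπle v) (norm_nonneg _))
    · refine le_of_tendsto' hSz fun n => ?_
      simpa [hz1] using (T.comp π).le_opNorm (z n)
  have hzw : ¬ WeaklyNull z := fun hz => hxw fun f => by
    -- undo the normalization: `f (x n) = ‖y n‖ * (f ∘ π) (z n)`
    have := hylim.mul (hz (f.comp π))
    rw [one_mul] at this
    refine this.congr fun n => ?_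
    rw [ContinuousLinearMap.comp_apply, hπz, map_smul, smul_eq_mul, mul_inv_cancel_left₀ (hy0 n)]
  obtain ⟨v, hv1, hv⟩ := h (T.comp π) ⟨z, ⟨hz1, hS ▸ hSz⟩, hzw⟩
  rw [hS, ContinuousLinearMap.comp_apply] at hv
  rcases (norm_nonneg T).eq_or_lt with hT | hT
  · -- the zero operator attains its norm at any unit vector
    refine ⟨x 0, hx1 0, le_antisymm ?_ (hT ▸ norm_nonneg _)⟩
    simpa [hx1] using T.le_opNorm (x 0)
  · refine ⟨π v, le_antisymm (hv1 ▸ hπle v) ?_, hv⟩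
    -- `‖T‖ = ‖T (π v)‖ ≤ ‖T‖ * ‖π v‖`, and `‖T‖` cancels
    have := T.le_opNorm (π v)
    rw [hv] at this
    exact le_of_mul_le_mul_left (by simpa using this) hT
end

section
/- Let E and F be Banach spaces such that the pair (E, F) has the weak maximizing property, and let E₁ be a closed subspace of E that is 1-complemented in E, i.e., there is a bounded linear projection P : E → E with range E₁ and ‖P‖ = 1. Then the pair (E₁, F) also has the weak maximizing property. -/
/-!
Let `Q : E → E₁` be `P` with codomain restricted to `E₁`; it is a contraction fixing `E₁` pointwise.
For `T : E₁ → F` the operator `T ∘ Q : E → F` has the same norm as `T`, and a maximizing sequence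
of `T` that is not weakly null remains so for `T ∘ Q`, because each functional `f` on `E₁` extends
to `f ∘ Q` on `E`. So `T ∘ Q` attains its norm at some unit vector `z`; if `T ≠ 0`, then
`‖T‖ = ‖T (Q z)‖ ≤ ‖T‖ ‖Q z‖` and `‖Q z‖ ≤ 1` force `‖Q z‖ = 1`, so `T` attains its norm at `Q z`.
-/

open Filter Topology

theorem statement4 {E F : Type*}
    [NormedAddCommGroup E] [NormedSpace ℝ E] [CompleteSpace E]
    [NormedAddCommGroup F] [NormedSpace ℝ F] [CompleteSpace F]
    (E₁ : Submodule ℝ E) (hE₁ : IsClosed (E₁ : Set E))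
    (P : E →L[ℝ] E) (hrange : LinearMap.range P.toLinearMap = E₁)
    (hproj : ∀ x : E, P (P x) = P x) (hnorm : ‖P‖ = 1)
    (h : WMP E F) : WMP E₁ F := by
  rintro T ⟨x, ⟨hx1, hxT⟩, hxw⟩
  have hmem : ∀ y, P y ∈ E₁ := fun y => hrange ▸ LinearMap.mem_range_self P.toLinearMap y
  let Q : E →L[ℝ] E₁ := P.codRestrict E₁ hmem
  have hQ : ∀ y : E₁, Q y = y := by
    rintro ⟨y, hy⟩
    rw [← hrange] at hy
    obtain ⟨z, rfl⟩ := hy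
    exact Subtype.ext (hproj z)
  have hQle : ∀ y, ‖Q y‖ ≤ ‖y‖ := fun y => by
    have := P.le_opNorm y
    rwa [hnorm, one_mul] at this
  have hS : ‖T.comp Q‖ = ‖T‖ := by
    apply le_antisymm
    · refine ContinuousLinearMap.opNorm_le_bound _ (norm_nonneg _) fun y => ?_
      exact (T.le_opNorm (Q y)).trans (mul_le_mul_of_nonneg_left (hQle y) (norm_nonneg _))
    · refine ContinuousLinearMap.opNorm_le_bound _ (norm_nonneg _) fun y => ?_
      have := (T.comp Q).le_opNorm (y : E)
      rwa [ContinuousLinearMap.comp_apply, hQ] at this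
  obtain ⟨z, hz1, hz⟩ := h (T.comp Q) ⟨fun n => (x n : E), ⟨hx1, by simpa [hS, hQ] using hxT⟩,
    fun hw => hxw fun f => by simpa [hQ] using hw (f.comp Q)⟩
  rw [hS, ContinuousLinearMap.comp_apply] at hz
  -- For `T = 0` the vector `Q z` may vanish, but any unit vector of `E₁` works, e.g. `x 0`.
  rcases eq_or_ne T 0 with rfl | hT
  · exact ⟨x 0, hx1 0, by simp⟩
  · refine ⟨Q z, le_antisymm (hz1 ▸ hQle z) ?_, hz⟩
    have := T.le_opNorm (Q z)
    rw [hz] at this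
    exact (le_mul_iff_one_le_right (norm_pos_iff.2 hT)).1 this
end

section
/- Let E₁, E₂ and F be Banach spaces. If both pairs (E₁, F) and (E₂, F) have the weak maximizing property, then the pair (E₁ ⊕_1 E₂, F) also has the weak maximizing property. -/
/-!
Let `z n` be a maximizing sequence for `T` on `E₁ ⊕₁ E₂` that is not weakly null. Some functional
`g` does not tend to `0` along `z n`; splitting `g` into its two parts, one of them, say the one on
`E₁`, does not tend to `0` along the `E₁`-components `x n`. Along a subsequence `‖x n‖` is then
bounded below by some `d > 0`. Since the norm is additive over the two components,
`‖T‖ ‖x n‖ - ‖T x n‖ ≤ ‖T‖ - ‖T (z n)‖ → 0`, so the normalized vectors `x n / ‖x n‖` form a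
maximizing sequence for `T` restricted to `E₁`, this restriction has the same norm as `T`, and the
sequence is not weakly null because `‖x n‖ ≤ 1`. The WMP of `(E₁, F)` gives a unit vector of `E₁`
at which `T` attains its norm. The lemma `attainsNorm_of_component` carries this out for a
general summand.
-/

open Filter Topology

/-- If `E₁` is an `ℓ¹`-summand of `E` (embedding `i`, projection `p`) and the `E₁`-components of a
maximizing sequence for `T` are not weakly null, the WMP of `(E₁, F)` makes `T` attain its norm. -/
theorem attainsNorm_of_component {E₁ E F : Type*}
    [NormedAddCommGroup E₁] [NormedSpace ℝ E₁]
    [NormedAddCommGroup E] [NormedSpace ℝ E]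
    [NormedAddCommGroup F] [NormedSpace ℝ F]
    (h : WMP E₁ F) (i : E₁ →L[ℝ] E) (p : E →L[ℝ] E₁) (hi : ∀ x, ‖i x‖ = ‖x‖)
    (hp : ∀ z, ‖z‖ = ‖p z‖ + ‖z - i (p z)‖)
    (T : E →L[ℝ] F) (z : ℕ → E) (hz : MaximizingSeq T z) (f : E₁ →L[ℝ] ℝ)
    (hf : ¬ Tendsto (fun n => f (p (z n))) atTop (𝓝 0)) : AttainsNorm T := by
  obtain ⟨hz1, hzT⟩ := hz
  rw [Metric.tendsto_atTop] at hf
  push Not at hf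
  obtain ⟨ε, hε, hf⟩ := hf
  obtain ⟨φ, hφ, hfφ⟩ := extraction_of_frequently_atTop (frequently_atTop.2 hf)
  simp only [dist_zero_right, Real.norm_eq_abs] at hfφ
  set x : ℕ → E₁ := fun n => p (z (φ n)) with hx
  have hfx : ∀ n, ε ≤ |f (x n)| := hfφ
  have hx1 : ∀ n, ‖x n‖ ≤ 1 := fun n => by
    have := hp (z (φ n))
    rw [hz1] at this
    have := norm_nonneg (z (φ n) - i (p (z (φ n))))
    simp only [hx]; linarith
  have hbound : ∀ n, ε ≤ ‖f‖ * ‖x n‖ := fun n => (hfx n).trans (f.le_opNorm _)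
  have hfpos : 0 < ‖f‖ := by
    refine (norm_nonneg f).lt_of_ne fun h0 => ?_
    have := hbound 0
    rw [← h0, zero_mul] at this
    linarith
  set d := ε / ‖f‖ with hd
  have hdpos : 0 < d := div_pos hε hfpos
  have hdx : ∀ n, d ≤ ‖x n‖ := fun n => by
    rw [hd, div_le_iff₀ hfpos, mul_comm]; exact hbound n
  have hxpos : ∀ n, 0 < ‖x n‖ := fun n => hdpos.trans_le (hdx n)
  set T₁ : E₁ →L[ℝ] F := T.comp i with hT₁
  have hT₁le : ‖T₁‖ ≤ ‖T‖ := T₁.opNorm_le_bound (norm_nonneg _) fun y => by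
    simpa [hT₁, hi] using T.le_opNorm (i y)
  set u : ℕ → E₁ := fun n => ‖x n‖⁻¹ • x n with hu
  have hu1 : ∀ n, ‖u n‖ = 1 := fun n => by
    simp [hu, norm_smul, (hxpos n).ne']
  have hTu : ∀ n, ‖T₁ (u n)‖ = ‖T₁ (x n)‖ / ‖x n‖ := fun n => by
    simp [hu, norm_smul, div_eq_inv_mul]
  have hTu_le : ∀ n, ‖T₁ (u n)‖ ≤ ‖T₁‖ := fun n => by
    simpa [hu1] using T₁.le_opNorm (u n)
  -- the defect `‖T‖ - ‖T (z n)‖` dominates the defect of `x n`, and `d ≤ ‖x n‖`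
  have hlow : ∀ n, ‖T‖ - (‖T‖ - ‖T (z (φ n))‖) / d ≤ ‖T₁ (u n)‖ := fun n => by
    have hsplit : ‖T (z (φ n))‖ ≤ ‖T₁ (x n)‖ + ‖T‖ * (1 - ‖x n‖) := by
      have e : T (z (φ n)) = T₁ (x n) + T (z (φ n) - i (p (z (φ n)))) := by
        simp [hT₁, hx]
      have e2 : 1 - ‖x n‖ = ‖z (φ n) - i (p (z (φ n)))‖ := by
        have := hp (z (φ n))
        rw [hz1] at this
        simp only [hx]; linarith
      rw [e2]
      calc ‖T (z (φ n))‖ = ‖T₁ (x n) + T (z (φ n) - i (p (z (φ n))))‖ := by rw [← e]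
        _ ≤ _ := (norm_add_le _ _).trans (by gcongr; exact T.le_opNorm _)
    have hdef : 0 ≤ ‖T‖ - ‖T (z (φ n))‖ := by
      have := T.le_opNorm (z (φ n))
      rw [hz1] at this; linarith
    have h1 : (‖T‖ - ‖T (z (φ n))‖) / ‖x n‖ ≤ (‖T‖ - ‖T (z (φ n))‖) / d :=
      div_le_div_of_nonneg_left hdef hdpos (hdx n)
    have h2 : ‖T‖ - (‖T‖ - ‖T (z (φ n))‖) / ‖x n‖ ≤ ‖T₁ (u n)‖ := by
      rw [hTu, sub_le_iff_le_add, ← add_div, le_div_iff₀ (hxpos n)]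
      linarith
    linarith
  have hlim : Tendsto (fun n => ‖T‖ - (‖T‖ - ‖T (z (φ n))‖) / d) atTop (𝓝 ‖T‖) := by
    have := ((tendsto_const_nhds (x := ‖T‖)).sub (hzT.comp hφ.tendsto_atTop)).div_const d
    simpa using (tendsto_const_nhds (x := ‖T‖)).sub this
  have hTu_lim : Tendsto (fun n => ‖T₁ (u n)‖) atTop (𝓝 ‖T‖) :=
    tendsto_of_tendsto_of_tendsto_of_le_of_le hlim tendsto_const_nhds hlow
      fun n => (hTu_le n).trans hT₁le
  have hnorm : ‖T₁‖ = ‖T‖ := le_antisymm hT₁le (le_of_tendsto' hTu_lim hTu_le)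
  obtain ⟨y, hy, hTy⟩ := h T₁ ⟨u, ⟨hu1, hnorm ▸ hTu_lim⟩, fun hw => by
    have hfu : ∀ n, ε ≤ |f (u n)| := fun n => by
      have e : |f (u n)| = ‖x n‖⁻¹ * |f (x n)| := by simp [hu, abs_mul]
      rw [e]
      exact (hfx n).trans (le_mul_of_one_le_left (abs_nonneg _)
        ((one_le_inv₀ (hxpos n)).2 (hx1 n)))
    have := ge_of_tendsto' (hw f).abs hfu
    rw [abs_zero] at this
    linarith⟩
  exact ⟨i y, by rw [hi, hy], hTy.trans hnorm⟩

theorem statement5 {E₁ E₂ F : Type*}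
    [NormedAddCommGroup E₁] [NormedSpace ℝ E₁] [CompleteSpace E₁]
    [NormedAddCommGroup E₂] [NormedSpace ℝ E₂] [CompleteSpace E₂]
    [NormedAddCommGroup F] [NormedSpace ℝ F] [CompleteSpace F]
    (h₁ : WMP E₁ F) (h₂ : WMP E₂ F) :
    WMP (WithLp 1 (E₁ × E₂)) F := by
  rintro T ⟨z, hz, hnull⟩
  have hnorm : ∀ w : WithLp 1 (E₁ × E₂), ‖w‖ = ‖w.fst‖ + ‖w.snd‖ := fun w => by
    rw [WithLp.prod_norm_eq_add (by simp)]; simp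
  let e := WithLp.prodContinuousLinearEquiv 1 ℝ E₁ E₂
  let i₁ : E₁ →L[ℝ] WithLp 1 (E₁ × E₂) := e.symm.toContinuousLinearMap.comp (.inl ℝ E₁ E₂)
  let i₂ : E₂ →L[ℝ] WithLp 1 (E₁ × E₂) := e.symm.toContinuousLinearMap.comp (.inr ℝ E₁ E₂)
  let p₁ : WithLp 1 (E₁ × E₂) →L[ℝ] E₁ := (ContinuousLinearMap.fst ℝ E₁ E₂).comp e.toContinuousLinearMap
  let p₂ : WithLp 1 (E₁ × E₂) →L[ℝ] E₂ := (ContinuousLinearMap.snd ℝ E₁ E₂).comp e.toContinuousLinearMap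
  have hsum : ∀ w, i₁ (p₁ w) + i₂ (p₂ w) = w := fun w => by
    apply e.injective
    rw [map_add]
    simp [i₁, i₂, p₁, p₂]
  have hi₁ : ∀ x, ‖i₁ x‖ = ‖x‖ := fun x => by simp [hnorm, i₁, e]
  have hi₂ : ∀ x, ‖i₂ x‖ = ‖x‖ := fun x => by simp [hnorm, i₂, e]
  have hadd : ∀ w, ‖w‖ = ‖p₁ w‖ + ‖p₂ w‖ := hnorm
  have hsub₁ : ∀ w, w - i₁ (p₁ w) = i₂ (p₂ w) := fun w => sub_eq_of_eq_add' (hsum w).symm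
  have hsub₂ : ∀ w, w - i₂ (p₂ w) = i₁ (p₁ w) := fun w => sub_eq_of_eq_add (hsum w).symm
  rw [WeaklyNull] at hnull
  push Not at hnull
  obtain ⟨g, hg⟩ := hnull
  by_cases hc : Tendsto (fun n => (g.comp i₁) (p₁ (z n))) atTop (𝓝 0)
  · refine attainsNorm_of_component h₂ i₂ p₂ hi₂ (fun w => ?_) T z hz (g.comp i₂) fun hc₂ => hg ?_
    · rw [hsub₂, hi₁, hadd, add_comm]
    · have := hc.add hc₂
      rw [add_zero] at this
      refine this.congr fun n => ?_
      conv_rhs => rw [← hsum (z n), map_add]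
      rfl
  · refine attainsNorm_of_component h₁ i₁ p₁ hi₁ (fun w => ?_) T z hz (g.comp i₁) hc
    rw [hsub₁, hi₂, hadd]
end

section
/- Let E, F₁ and F₂ be Banach spaces. If both pairs (E, F₁) and (E, F₂) have the weak maximizing property, then the pair (E, F₁ ⊕_∞ F₂) also has the weak maximizing property. -/
/-!
Write `T = (T₁, T₂)`. A maximizing sequence `x` of `T` that is not weakly null has infinitely many
terms on which some functional `f` satisfies `ε ≤ |f (x n)|`. As `‖T (x n)‖` is the maximum of
`‖T₁ (x n)‖` and `‖T₂ (x n)‖`, one coordinate `Tᵢ` realizes it for infinitely many of these terms.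
Along that subsequence `‖Tᵢ (x n)‖ → ‖T‖`, which forces `‖Tᵢ‖ = ‖T‖`; so the subsequence is
maximizing for `Tᵢ` and not weakly null, and a vector at which `Tᵢ` attains its norm also
serves for `T`. The passage from a coordinate to `T` is `attainsNorm_of_dominated`.
-/

open Filter Topology

/-- If `S` is dominated by `T` pointwise, and the two agree in norm on infinitely many terms of a
maximizing sequence of `T` on which a functional stays away from `0`, then the weak maximizing
property for the target of `S` makes `T` attain its norm. -/
lemma attainsNorm_of_dominated {E F G : Type*}
    [NormedAddCommGroup E] [NormedSpace ℝ E]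
    [NormedAddCommGroup F] [NormedSpace ℝ F]
    [NormedAddCommGroup G] [NormedSpace ℝ G]
    (hG : WMP E G) (T : E →L[ℝ] F) (S : E →L[ℝ] G) (hST : ∀ v, ‖S v‖ ≤ ‖T v‖)
    {x : ℕ → E} (hx : MaximizingSeq T x) (f : E →L[ℝ] ℝ) {ε : ℝ} (hε : 0 < ε)
    (hfreq : ∃ᶠ n in atTop, ε ≤ |f (x n)| ∧ ‖S (x n)‖ = ‖T (x n)‖) :
    AttainsNorm T := by
  obtain ⟨φ, hφ, hφx⟩ := extraction_of_frequently_atTop hfreq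
  have hlim : Tendsto (fun n => ‖S (x (φ n))‖) atTop (𝓝 ‖T‖) := by
    simp only [fun n => (hφx n).2]
    exact hx.2.comp hφ.tendsto_atTop
  have hle : ‖S‖ ≤ ‖T‖ :=
    S.opNorm_le_bound (norm_nonneg T) fun v => (hST v).trans (T.le_opNorm v)
  have hge : ‖T‖ ≤ ‖S‖ :=
    le_of_tendsto' hlim fun n => by simpa [hx.1] using S.le_opNorm (x (φ n))
  have hnorm : ‖S‖ = ‖T‖ := le_antisymm hle hge
  obtain ⟨v, hv, hSv⟩ := hG S ⟨fun n => x (φ n), ⟨fun n => hx.1 _, by rwa [hnorm]⟩, fun hw => by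
    have h0 : Tendsto (fun n => |f (x (φ n))|) atTop (𝓝 0) := by simpa using (hw f).abs
    exact absurd (ge_of_tendsto' h0 fun n => (hφx n).1) (not_le.mpr hε)⟩
  refine ⟨v, hv, le_antisymm (by simpa [hv] using T.le_opNorm v) ?_⟩
  rw [← hnorm, ← hSv]
  exact hST v

theorem statement6 {E F₁ F₂ : Type*}
    [NormedAddCommGroup E] [NormedSpace ℝ E] [CompleteSpace E]
    [NormedAddCommGroup F₁] [NormedSpace ℝ F₁] [CompleteSpace F₁]
    [NormedAddCommGroup F₂] [NormedSpace ℝ F₂] [CompleteSpace F₂]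
    (h₁ : WMP E F₁) (h₂ : WMP E F₂) :
    WMP E (F₁ × F₂) := by
  rintro T ⟨x, hx, hw⟩
  obtain ⟨f, hf⟩ := not_forall.mp hw
  obtain ⟨ε, hε, hfreq⟩ : ∃ ε > 0, ∃ᶠ n in atTop, ε ≤ |f (x n)| := by
    by_contra! hcon
    refine hf (Metric.tendsto_nhds.mpr fun ε hε => ?_)
    filter_upwards [hcon ε hε] with n hn
    simpa [Real.dist_eq] using hn
  have hsplit : ∃ᶠ n in atTop,
      (ε ≤ |f (x n)| ∧ ‖(T (x n)).1‖ = ‖T (x n)‖) ∨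
      (ε ≤ |f (x n)| ∧ ‖(T (x n)).2‖ = ‖T (x n)‖) := by
    refine hfreq.mono fun n hn => ?_
    rw [Prod.norm_def]
    rcases max_choice ‖(T (x n)).1‖ ‖(T (x n)).2‖ with h | h
    · exact Or.inl ⟨hn, h.symm⟩
    · exact Or.inr ⟨hn, h.symm⟩
  rcases frequently_or_distrib.mp hsplit with h | h
  · exact attainsNorm_of_dominated h₁ T ((ContinuousLinearMap.fst ℝ F₁ F₂).comp T)
      (fun v => norm_fst_le (T v)) hx f hε h
  · exact attainsNorm_of_dominated h₂ T ((ContinuousLinearMap.snd ℝ F₁ F₂).comp T)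
      (fun v => norm_snd_le (T v)) hx f hε h
end

section
/- For every real number p with 2 < p < ∞, the pair (ℓ₂ ⊕_p ℝ, ℓ₂) fails the weak maximizing property: there exists a bounded linear operator S : ℓ₂ ⊕_p ℝ → ℓ₂ which admits a maximizing sequence that does not converge weakly to 0, yet S does not attain its norm. -/
/-!
Put `d n = (n + 1) / (n + 2)`, so that `0 ≤ d n < 1` and `d n → 1`, and let
`S (x, a) = (a, d 0 * x 0, d 1 * x 1, …)`. Then `‖S (x, a)‖ ^ 2 = a ^ 2 + ∑ (d n * x n) ^ 2`
(`norm_opFun_sq`), which is at most `a ^ 2 + ‖x‖ ^ 2`, strictly less when `x ≠ 0`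
(`norm_opFun_sq_lt`).

With `c = 2 ^ (-1 / p)`, the power mean inequality bounds `‖x‖ ^ 2 + a ^ 2` by `2 * c ^ 2` on the
unit sphere of `ℓ₂ ⊕_p ℝ` (`sq_add_sq_le`). The unit vectors `(c • eₙ, c)` satisfy
`‖S (c • eₙ, c)‖ ^ 2 = c ^ 2 * (1 + d n ^ 2) → 2 * c ^ 2`; hence `‖S‖ = √2 * c`, and these vectors
form a maximizing sequence, which is not weakly null because its last coordinate is constantly `c`.
The norm is not attained: at a unit vector with `x ≠ 0` the strict inequality applies, and at
`(0, ±1)` the value is `1`, which is less than `√2 * c` because `p > 2`.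
-/

open Filter Topology

/-- The real Hilbert space `ℓ₂` of square-summable real sequences. -/
noncomputable abbrev ellTwo : Type := lp (fun _ : ℕ => ℝ) 2

/-- The weights of the diagonal part of the operator, increasing strictly to `1`. -/
noncomputable def weight (n : ℕ) : ℝ := ((n : ℝ) + 1) / ((n : ℝ) + 2)

lemma weight_nonneg (n : ℕ) : 0 ≤ weight n := by
  unfold weight; positivity

lemma weight_lt_one (n : ℕ) : weight n < 1 := by
  unfold weight
  rw [div_lt_one (by positivity)]
  linarith

lemma tendsto_weight : Tendsto weight atTop (𝓝 1) := by
  have h : weight = fun n : ℕ => 1 - 1 / (((n + 1 : ℕ) : ℝ) + 1) := by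
    funext n
    unfold weight
    push_cast
    field_simp
    ring
  rw [h]
  have := (tendsto_const_nhds (x := (1 : ℝ))).sub
    ((tendsto_add_atTop_iff_nat 1).2 (tendsto_one_div_add_atTop_nhds_zero_nat (𝕜 := ℝ)))
  simpa using this

lemma weight_mul_sq_le (n : ℕ) (y : ℝ) : (weight n * y) ^ 2 ≤ y ^ 2 := by
  have h : weight n ^ 2 ≤ 1 := pow_le_one₀ (weight_nonneg n) (weight_lt_one n).le
  rw [mul_pow]
  nlinarith [sq_nonneg y]

lemma hasSum_sq (x : ellTwo) : HasSum (fun n => x n ^ 2) (‖x‖ ^ 2) := by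
  have h := lp.hasSum_norm (p := 2) (by norm_num) x
  simpa using h

lemma summable_weight (x : ellTwo) : Summable fun n => (weight n * x n) ^ 2 :=
  Summable.of_nonneg_of_le (fun _ => sq_nonneg _) (fun n => weight_mul_sq_le n _)
    (hasSum_sq x).summable

/-- The sequence `(a, weight 0 * x 0, weight 1 * x 1, …)`. -/
noncomputable def opSeq (x : ellTwo) (a : ℝ) : ℕ → ℝ
  | 0 => a
  | n + 1 => weight n * x n

lemma summable_opSeq (x : ellTwo) (a : ℝ) : Summable fun n => opSeq x a n ^ 2 :=
  (summable_nat_add_iff 1).1 (summable_weight x)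

/-- The sequence `opSeq x a` as an element of `ℓ₂`. -/
noncomputable def opFun (x : ellTwo) (a : ℝ) : ellTwo :=
  ⟨opSeq x a, (memℓp_gen_iff (by norm_num)).2 (by simpa using summable_opSeq x a)⟩

lemma norm_opFun_sq (x : ellTwo) (a : ℝ) :
    ‖opFun x a‖ ^ 2 = a ^ 2 + ∑' n, (weight n * x n) ^ 2 := by
  rw [← (hasSum_sq (opFun x a)).tsum_eq]
  exact (summable_opSeq x a).tsum_eq_zero_add

lemma norm_opFun_sq_le (x : ellTwo) (a : ℝ) : ‖opFun x a‖ ^ 2 ≤ ‖x‖ ^ 2 + a ^ 2 := by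
  rw [norm_opFun_sq, ← (hasSum_sq x).tsum_eq, add_comm]
  have := (summable_weight x).tsum_le_tsum (fun n => weight_mul_sq_le n (x n))
    (hasSum_sq x).summable
  linarith

lemma norm_opFun_sq_lt (x : ellTwo) (a : ℝ) (hx : x ≠ 0) :
    ‖opFun x a‖ ^ 2 < ‖x‖ ^ 2 + a ^ 2 := by
  obtain ⟨k, hk⟩ : ∃ k, x k ≠ 0 := by
    by_contra! h
    exact hx (lp.ext (funext h))
  rw [norm_opFun_sq, ← (hasSum_sq x).tsum_eq, add_comm]
  have hlt : (weight k * x k) ^ 2 < x k ^ 2 := by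
    have h : weight k ^ 2 < 1 := pow_lt_one₀ (weight_nonneg k) (weight_lt_one k) two_ne_zero
    have h2 : 0 < x k ^ 2 := by positivity
    rw [mul_pow]
    nlinarith
  have := Summable.tsum_lt_tsum (fun n => weight_mul_sq_le n (x n)) hlt (summable_weight x)
    (hasSum_sq x).summable
  linarith

lemma norm_opFun_single_sq (n : ℕ) (c a : ℝ) :
    ‖opFun (lp.single 2 n c) a‖ ^ 2 = a ^ 2 + (weight n * c) ^ 2 := by
  rw [norm_opFun_sq, tsum_eq_single n]
  · simp
  · intro k hk
    simp [hk]

/-- The operator `(x, a) ↦ (a, weight 0 * x 0, weight 1 * x 1, …)` as a linear map. -/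
noncomputable def opLin (q : ENNReal) : WithLp q (ellTwo × ℝ) →ₗ[ℝ] ellTwo where
  toFun z := opFun z.fst z.snd
  map_add' z w := by
    refine lp.ext (funext fun n => ?_)
    cases n with
    | zero => rfl
    | succ n => exact mul_add _ _ _
  map_smul' r z := by
    refine lp.ext (funext fun n => ?_)
    cases n with
    | zero => rfl
    | succ n => exact mul_left_comm _ _ _

lemma two_mul_sq_const {p : ℝ} : 2 * ((2 : ℝ) ^ (-1 / p)) ^ 2 = 2 ^ (1 - 2 / p) := by
  rw [← Real.rpow_natCast, ← Real.rpow_mul (by norm_num)]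
  nth_rewrite 1 [← Real.rpow_one 2]
  rw [← Real.rpow_add (by norm_num)]
  congr 1
  push_cast
  ring

/-- The power mean inequality between the exponents `2` and `p`. -/
lemma sq_add_sq_le {p : ℝ} (hp : 2 < p) {s t : ℝ} (hs : 0 ≤ s) (ht : 0 ≤ t) :
    s ^ 2 + t ^ 2 ≤ 2 * ((2 : ℝ) ^ (-1 / p)) ^ 2 * ((s ^ p + t ^ p) ^ (1 / p)) ^ 2 := by
  have hp0 : 0 < p := by linarith
  lift s to NNReal using hs
  lift t to NNReal using ht
  have h : ((s : ℝ) ^ 2 + (t : ℝ) ^ 2) ^ (p / 2) ≤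
      2 ^ (p / 2 - 1) * (((s : ℝ) ^ 2) ^ (p / 2) + ((t : ℝ) ^ 2) ^ (p / 2)) := by
    exact_mod_cast NNReal.rpow_add_le_mul_rpow_add_rpow (s ^ (2 : ℕ)) (t ^ (2 : ℕ))
      (p := p / 2) (by linarith)
  have hpow (u : NNReal) : ((u : ℝ) ^ 2) ^ (p / 2) = (u : ℝ) ^ p := by
    rw [← Real.rpow_natCast, ← Real.rpow_mul u.coe_nonneg]
    congr 1
    push_cast
    ring
  rw [hpow, hpow] at h
  have h2 := Real.rpow_le_rpow (by positivity) h (z := 2 / p) (by positivity)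
  rw [← Real.rpow_mul (by positivity), Real.mul_rpow (by positivity) (by positivity),
    ← Real.rpow_mul (by norm_num)] at h2
  have e1 : p / 2 * (2 / p) = 1 := by field_simp
  have e2 : (p / 2 - 1) * (2 / p) = 1 - 2 / p := by field_simp
  rw [e1, e2, Real.rpow_one] at h2
  rw [two_mul_sq_const]
  convert h2 using 2
  rw [← Real.rpow_natCast, ← Real.rpow_mul (by positivity)]
  congr 1
  push_cast
  ring

theorem statement7 (p : ℝ) (hp : 2 < p) [Fact (1 ≤ ENNReal.ofReal p)] :
    ∃ S : WithLp (ENNReal.ofReal p) (ellTwo × ℝ) →L[ℝ] ellTwo,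
      (∃ x : ℕ → WithLp (ENNReal.ofReal p) (ellTwo × ℝ),
        MaximizingSeq S x ∧ ¬ WeaklyNull x) ∧ ¬ AttainsNorm S := by
  have hp0 : 0 < p := by linarith
  have hpr : (ENNReal.ofReal p).toReal = p := ENNReal.toReal_ofReal hp0.le
  have hnorm (z : WithLp (ENNReal.ofReal p) (ellTwo × ℝ)) :
      ‖z‖ = (‖z.fst‖ ^ p + ‖z.snd‖ ^ p) ^ (1 / p) := by
    rw [WithLp.prod_norm_eq_add (by rw [hpr]; exact hp0), hpr]
  obtain ⟨c, hc⟩ : ∃ c : ℝ, c = 2 ^ (-1 / p) := ⟨_, rfl⟩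
  have hc0 : 0 < c := by rw [hc]; positivity
  have hcp : c ^ p = 1 / 2 := by
    rw [hc, ← Real.rpow_mul (by norm_num), div_mul_cancel₀ _ hp0.ne', Real.rpow_neg_one]
    norm_num
  obtain ⟨M, hM⟩ : ∃ M : ℝ, M = √2 * c := ⟨_, rfl⟩
  have hM0 : 0 < M := by rw [hM]; positivity
  have hM2 : M ^ 2 = 2 * c ^ 2 := by rw [hM, mul_pow, Real.sq_sqrt (by norm_num)]
  have hM1 : 1 < M ^ 2 := by
    rw [hM2, hc, two_mul_sq_const]
    refine Real.one_lt_rpow (by norm_num) ?_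
    rw [sub_pos, div_lt_one hp0]
    exact hp
  have hbase (z : WithLp (ENNReal.ofReal p) (ellTwo × ℝ)) :
      ‖z.fst‖ ^ 2 + z.snd ^ 2 ≤ M ^ 2 * ‖z‖ ^ 2 := by
    rw [hM2, hc, hnorm z, ← sq_abs z.snd]
    exact sq_add_sq_le hp (norm_nonneg _) (abs_nonneg _)
  have hbound (z : WithLp (ENNReal.ofReal p) (ellTwo × ℝ)) :
      ‖opLin (ENNReal.ofReal p) z‖ ≤ M * ‖z‖ := by
    refine le_of_sq_le_sq ?_ (by positivity)
    rw [mul_pow]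
    exact (norm_opFun_sq_le z.fst z.snd).trans (hbase z)
  let S := (opLin (ENNReal.ofReal p)).mkContinuous M hbound
  have hS (z) : ‖S z‖ = ‖opFun z.fst z.snd‖ := rfl
  let x : ℕ → WithLp (ENNReal.ofReal p) (ellTwo × ℝ) := fun n =>
    WithLp.toLp _ (lp.single 2 n c, c)
  have hx1 (n) : ‖x n‖ = 1 := by
    have h1 : ‖(x n).fst‖ = c := by
      change ‖(lp.single 2 n c : ellTwo)‖ = c
      rw [lp.norm_single (by norm_num), Real.norm_of_nonneg hc0.le]
    have h2 : ‖(x n).snd‖ = c := Real.norm_of_nonneg hc0.le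
    rw [hnorm, h1, h2, hcp]
    norm_num
  have hlim : Tendsto (fun n => ‖S (x n)‖) atTop (𝓝 M) := by
    have e (n) : ‖S (x n)‖ = √(c ^ 2 + (weight n * c) ^ 2) := by
      rw [← norm_opFun_single_sq, Real.sqrt_sq (norm_nonneg _)]
      rfl
    have e' : M = √(c ^ 2 + (1 * c) ^ 2) := by
      rw [← Real.sqrt_sq hM0.le, hM2]
      congr 1
      ring
    simp only [e]
    rw [e']
    exact (((tendsto_weight.mul_const c).pow 2).const_add _).sqrt
  have hSM : ‖S‖ = M := by
    refine le_antisymm (LinearMap.mkContinuous_norm_le _ hM0.le _) ?_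
    refine le_of_tendsto hlim (Eventually.of_forall fun n => ?_)
    simpa [hx1 n] using S.le_opNorm (x n)
  refine ⟨S, ⟨x, ⟨hx1, by rw [hSM]; exact hlim⟩, ?_⟩, ?_⟩
  · intro hw
    have h := hw (WithLp.sndL _ ℝ ellTwo ℝ)
    have h' : Tendsto (fun _ : ℕ => c) atTop (𝓝 0) := h
    exact hc0.ne' (tendsto_nhds_unique tendsto_const_nhds h')
  · rintro ⟨z, hz1, hz⟩
    rw [hSM, hS] at hz
    by_cases h0 : z.fst = 0
    · have h1 : z.snd ^ 2 = 1 := by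
        have h := hnorm z
        rw [hz1, h0, norm_zero, Real.zero_rpow hp0.ne', zero_add, one_div,
          Real.rpow_rpow_inv (norm_nonneg _) hp0.ne', Real.norm_eq_abs] at h
        rw [← sq_abs, ← h, one_pow]
      have h2 := norm_opFun_sq_le z.fst z.snd
      rw [hz, h0, h1, norm_zero] at h2
      linarith
    · have h2 := norm_opFun_sq_lt z.fst z.snd h0
      have h3 := hbase z
      rw [hz] at h2
      rw [hz1] at h3
      linarith
end

section
/- For every real number q with 1 ≤ q < 2, the pair (ℓ₂, ℓ₂ ⊕_q ℝ) fails the weak maximizing property: there exists a bounded linear operator S : ℓ₂ → ℓ₂ ⊕_q ℝ which admits a maximizing sequence that does not converge weakly to 0, yet S does not attain its norm. -/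
/-!
Let `λ n = n / (n + 1)` and `D : ℓ₂ → ℓ₂` the diagonal operator with entries `λ n`, so that `λ 0 = 0`
and `λ n ↑ 1` without reaching `1`. The operator is `S x = (D x, x 0)`.

Convexity of `t ↦ t ^ (2 / q)` gives `‖(y, a)‖ ^ 2 ≤ 2 ^ (2 / q - 1) * (‖y‖ ^ 2 + |a| ^ 2)` in
`ℓ₂ ⊕_q ℝ` (`sq_norm_le`), with equality for `‖y‖ = |a|`, while `‖D x‖ ^ 2 + (x 0) ^ 2 ≤ ‖x‖ ^ 2`,
strictly as soon as `x n ≠ 0` for some `n ≥ 1` (`diag_sq_add_le`, `diag_sq_add_lt`). Hence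
`‖S‖ ^ 2 ≤ 2 ^ (2 / q - 1)`, and the unit vectors `(e 0 + e (n + 1)) / √2` show that this is an
equality; their zeroth coordinate is constant, so they are not weakly null. A unit vector at which
the norm is attained would be supported on the zeroth coordinate, but there `‖S x‖ = 1`, which is
smaller than `‖S‖` because `q < 2`.
-/

open Filter Topology

theorem ellTwo_hasSum_sq (x : ellTwo) : HasSum (fun i => x i ^ 2) (‖x‖ ^ 2) := by
  have h := lp.hasSum_norm (p := 2) (by norm_num) x
  simpa using h

theorem diag_coeff_sq_le (n : ℕ) (t : ℝ) : ((n / (n + 1) : ℝ) * t) ^ 2 ≤ t ^ 2 := by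
  have h0 : (0 : ℝ) ≤ n / (n + 1) := by positivity
  have h1 : (n / (n + 1) : ℝ) ≤ 1 := by
    rw [div_le_one (by positivity)]; linarith
  rw [mul_pow]
  exact mul_le_of_le_one_left (sq_nonneg t) (pow_le_one₀ h0 h1)

theorem diag_coeff_sq_lt (n : ℕ) {t : ℝ} (ht : t ≠ 0) : ((n / (n + 1) : ℝ) * t) ^ 2 < t ^ 2 := by
  have h0 : (0 : ℝ) ≤ n / (n + 1) := by positivity
  have h1 : (n / (n + 1) : ℝ) < 1 := by
    rw [div_lt_one (by positivity)]; linarith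
  rw [mul_pow]
  exact mul_lt_of_lt_one_left (by positivity) (pow_lt_one₀ h0 h1 two_ne_zero)

/-- The image of `x` under the diagonal operator with entries `n / (n + 1)`. -/
noncomputable def diagVec (x : ellTwo) : ellTwo :=
  ⟨fun n => (n / (n + 1) : ℝ) * x n, by
    apply memℓp_gen
    refine Summable.of_nonneg_of_le (fun i => by positivity) (fun i => ?_)
      (ellTwo_hasSum_sq x).summable
    simpa only [ENNReal.toReal_ofNat, Real.rpow_two, Real.norm_eq_abs, sq_abs] using
      diag_coeff_sq_le i (x i)⟩

theorem diagVec_apply (x : ellTwo) (n : ℕ) : diagVec x n = (n / (n + 1) : ℝ) * x n := rfl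

theorem diag_hasSum (x : ellTwo) :
    HasSum (fun n => diagVec x n ^ 2 + if n = 0 then x 0 ^ 2 else 0)
      (‖diagVec x‖ ^ 2 + x 0 ^ 2) :=
  (ellTwo_hasSum_sq _).add (hasSum_ite_eq 0 (x 0 ^ 2))

theorem diag_term_le (x : ellTwo) (n : ℕ) :
    diagVec x n ^ 2 + (if n = 0 then x 0 ^ 2 else 0) ≤ x n ^ 2 := by
  rcases eq_or_ne n 0 with rfl | hn
  · simp [diagVec_apply]
  · simpa [hn, diagVec_apply] using diag_coeff_sq_le n (x n)

theorem diag_sq_add_le (x : ellTwo) : ‖diagVec x‖ ^ 2 + x 0 ^ 2 ≤ ‖x‖ ^ 2 :=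
  hasSum_le (diag_term_le x) (diag_hasSum x) (ellTwo_hasSum_sq x)

theorem diag_sq_add_lt (x : ellTwo) {n : ℕ} (hn : n ≠ 0) (hx : x n ≠ 0) :
    ‖diagVec x‖ ^ 2 + x 0 ^ 2 < ‖x‖ ^ 2 := by
  refine hasSum_lt (i := n) (diag_term_le x) ?_ (diag_hasSum x) (ellTwo_hasSum_sq x)
  simpa [hn, diagVec_apply] using diag_coeff_sq_lt n hx

/-- The diagonal operator on `ℓ₂` with entries `n / (n + 1)`. -/
noncomputable def diagCLM : ellTwo →L[ℝ] ellTwo :=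
  LinearMap.mkContinuous
    { toFun := diagVec
      map_add' := fun x y => by
        ext n; simp [diagVec_apply, mul_add]
      map_smul' := fun c x => by
        ext n; simp [diagVec_apply, mul_left_comm] } 1 (fun x => by
      rw [one_mul]
      refine le_of_sq_le_sq ?_ (norm_nonneg x)
      exact (le_add_of_nonneg_right (sq_nonneg _)).trans (diag_sq_add_le x))

/-- The operator `x ↦ (D x, x 0)` into `ℓ₂ ⊕_q ℝ`, with `D` the diagonal operator `diagCLM`. -/
noncomputable def sumOp (q : ℝ) [Fact (1 ≤ ENNReal.ofReal q)] :
    ellTwo →L[ℝ] WithLp (ENNReal.ofReal q) (ellTwo × ℝ) :=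
  (WithLp.prodContinuousLinearEquiv (ENNReal.ofReal q) ℝ ellTwo ℝ).symm.toContinuousLinearMap ∘L
    (diagCLM.prod (lp.evalCLM ℝ (fun _ : ℕ => ℝ) 2 0))

theorem norm_sumOp {q : ℝ} (hq1 : 1 ≤ q) [Fact (1 ≤ ENNReal.ofReal q)] (x : ellTwo) :
    ‖sumOp q x‖ = (‖diagVec x‖ ^ q + |x 0| ^ q) ^ (1 / q) := by
  have h : (ENNReal.ofReal q).toReal = q := ENNReal.toReal_ofReal (by linarith)
  rw [WithLp.prod_norm_eq_add (by rw [h]; linarith), h]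
  rfl

/-- Comparison of the `ℓ_q` and `ℓ_2` norms on `ℝ²`: a case of the power mean inequality. -/
theorem sq_norm_le {q u v : ℝ} (hq1 : 1 ≤ q) (hq : q < 2) (hu : 0 ≤ u) (hv : 0 ≤ v) :
    ((u ^ q + v ^ q) ^ (1 / q)) ^ 2 ≤ 2 ^ (2 / q - 1) * (u ^ 2 + v ^ 2) := by
  have hq0 : 0 < q := by linarith
  have hp : 1 ≤ 2 / q := by rw [le_div_iff₀ hq0]; linarith
  have key := NNReal.rpow_add_le_mul_rpow_add_rpow
    (⟨u, hu⟩ ^ q : NNReal) (⟨v, hv⟩ ^ q : NNReal) hp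
  rw [← NNReal.coe_le_coe] at key
  push_cast at key
  have e : ∀ w : ℝ, 0 ≤ w → (w ^ q) ^ (2 / q) = w ^ 2 := fun w hw => by
    rw [← Real.rpow_mul hw, mul_div_cancel₀ _ hq0.ne', Real.rpow_two]
  have e2 : ((u ^ q + v ^ q) ^ (1 / q)) ^ 2 = (u ^ q + v ^ q) ^ (2 / q) := by
    rw [← Real.rpow_two, ← Real.rpow_mul (by positivity)]
    congr 1; ring
  rw [e2, ← e u hu, ← e v hv]
  exact key

theorem sq_norm_sumOp_le {q : ℝ} (hq1 : 1 ≤ q) (hq : q < 2) [Fact (1 ≤ ENNReal.ofReal q)]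
    (x : ellTwo) : ‖sumOp q x‖ ^ 2 ≤ 2 ^ (2 / q - 1) * (‖diagVec x‖ ^ 2 + x 0 ^ 2) := by
  rw [norm_sumOp hq1, ← sq_abs (x 0)]
  exact sq_norm_le hq1 hq (norm_nonneg _) (abs_nonneg _)

/-- The maximizing sequence `(e 0 + e (n + 1)) / √2`. -/
noncomputable def maxSeq (n : ℕ) : ellTwo :=
  lp.single 2 0 (√2)⁻¹ + lp.single 2 (n + 1) (√2)⁻¹

theorem maxSeq_zero (n : ℕ) : maxSeq n 0 = (√2)⁻¹ := by
  simp [maxSeq]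

theorem norm_maxSeq (n : ℕ) : ‖maxSeq n‖ = 1 := by
  have h : ‖maxSeq n‖ ^ 2 = 1 := by
    rw [maxSeq, norm_add_sq_real, lp.inner_single_left, lp.norm_single (by norm_num),
      lp.norm_single (by norm_num)]
    simp
    norm_num
  exact (pow_eq_one_iff_of_nonneg (norm_nonneg _) two_ne_zero).1 h

theorem diagVec_maxSeq (n : ℕ) :
    diagVec (maxSeq n) = lp.single 2 (n + 1) (((n + 1 : ℕ) / ((n + 1 : ℕ) + 1) : ℝ) * (√2)⁻¹) := by
  ext k
  rw [diagVec_apply]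
  rcases eq_or_ne k 0 with rfl | hk
  · simp
  · rcases eq_or_ne k (n + 1) with rfl | hk'
    · simp [maxSeq]
    · simp [maxSeq, hk, hk']

theorem norm_diagVec_maxSeq (n : ℕ) :
    ‖diagVec (maxSeq n)‖ = ((n + 1 : ℕ) / ((n + 1 : ℕ) + 1) : ℝ) * (√2)⁻¹ := by
  rw [diagVec_maxSeq, lp.norm_single (by norm_num), Real.norm_of_nonneg (by positivity)]

theorem limit_value {q : ℝ} (hq1 : 1 ≤ q) :
    ((1 * (√2)⁻¹) ^ q + ((√2)⁻¹) ^ q) ^ (1 / q) = √(2 ^ (2 / q - 1)) := by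
  have hq0 : 0 < q := by linarith
  rw [one_mul, ← two_mul, Real.mul_rpow (by norm_num) (by positivity),
    ← Real.rpow_mul (by positivity), mul_one_div_cancel hq0.ne', Real.rpow_one,
    Real.sqrt_eq_rpow, Real.sqrt_eq_rpow, ← Real.rpow_neg (by norm_num),
    ← Real.rpow_add (by norm_num), ← Real.rpow_mul (by norm_num)]
  congr 1
  ring

theorem tendsto_norm_sumOp_maxSeq {q : ℝ} (hq1 : 1 ≤ q) [Fact (1 ≤ ENNReal.ofReal q)] :
    Tendsto (fun n => ‖sumOp q (maxSeq n)‖) atTop (𝓝 (√(2 ^ (2 / q - 1)))) := by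
  have hq0 : 0 < q := by linarith
  rw [← limit_value hq1]
  simp_rw [norm_sumOp hq1, norm_diagVec_maxSeq, maxSeq_zero]
  rw [abs_of_nonneg (by positivity : (0 : ℝ) ≤ (√2)⁻¹)]
  have hl : Tendsto (fun n : ℕ => ((n + 1 : ℕ) / ((n + 1 : ℕ) + 1) : ℝ)) atTop (𝓝 1) :=
    (tendsto_natCast_div_add_atTop (1 : ℝ)).comp (tendsto_add_atTop_nat 1)
  exact (((hl.mul_const _).rpow_const (Or.inr hq0.le)).add_const _).rpow_const
    (Or.inr (by positivity))

theorem opNorm_sumOp {q : ℝ} (hq1 : 1 ≤ q) (hq : q < 2) [Fact (1 ≤ ENNReal.ofReal q)] :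
    ‖sumOp q‖ = √(2 ^ (2 / q - 1)) := by
  apply le_antisymm
  · refine ContinuousLinearMap.opNorm_le_bound _ (Real.sqrt_nonneg _) (fun x => ?_)
    refine le_of_sq_le_sq ?_ (by positivity)
    rw [mul_pow, Real.sq_sqrt (by positivity)]
    exact (sq_norm_sumOp_le hq1 hq x).trans
      (mul_le_mul_of_nonneg_left (diag_sq_add_le x) (by positivity))
  · refine le_of_tendsto (tendsto_norm_sumOp_maxSeq hq1) (Eventually.of_forall fun n => ?_)
    simpa [norm_maxSeq] using (sumOp q).le_opNorm (maxSeq n)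

theorem not_attainsNorm_sumOp {q : ℝ} (hq1 : 1 ≤ q) (hq : q < 2)
    [Fact (1 ≤ ENNReal.ofReal q)] : ¬ AttainsNorm (sumOp q) := by
  rintro ⟨x, hx, hS⟩
  have hq0 : 0 < q := by linarith
  have hK : (0 : ℝ) < 2 ^ (2 / q - 1) := by positivity
  have hS2 : ‖sumOp q x‖ ^ 2 = 2 ^ (2 / q - 1) := by
    rw [hS, opNorm_sumOp hq1 hq, Real.sq_sqrt hK.le]
  by_cases h : ∃ n, n ≠ 0 ∧ x n ≠ 0
  · obtain ⟨n, hn, hxn⟩ := h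
    have h1 := sq_norm_sumOp_le hq1 hq x
    have h2 := diag_sq_add_lt x hn hxn
    rw [hx, one_pow] at h2
    rw [hS2] at h1
    exact absurd (mul_lt_of_lt_one_right hK h2) (not_lt.2 h1)
  · push Not at h
    have hD : diagVec x = 0 := by
      ext n
      rcases eq_or_ne n 0 with rfl | hn
      · simp [diagVec_apply]
      · simp [diagVec_apply, h n hn]
    have hle : |x 0| ≤ 1 := by
      simpa [hx] using lp.norm_apply_le_norm two_ne_zero x 0
    have hval : ‖sumOp q x‖ = |x 0| := by
      rw [norm_sumOp hq1, hD, norm_zero, Real.zero_rpow hq0.ne', zero_add,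
        ← Real.rpow_mul (abs_nonneg _), mul_one_div_cancel hq0.ne', Real.rpow_one]
    have hgt : (1 : ℝ) < 2 ^ (2 / q - 1) := by
      apply Real.one_lt_rpow (by norm_num)
      rw [sub_pos, lt_div_iff₀ hq0]; linarith
    rw [← hS2, hval] at hgt
    exact absurd hgt (not_lt.2 (pow_le_one₀ (abs_nonneg _) hle))

theorem statement8 (q : ℝ) (hq1 : 1 ≤ q) (hq : q < 2) [Fact (1 ≤ ENNReal.ofReal q)] :
    ∃ S : ellTwo →L[ℝ] WithLp (ENNReal.ofReal q) (ellTwo × ℝ),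
      (∃ x : ℕ → ellTwo, MaximizingSeq S x ∧ ¬ WeaklyNull x) ∧ ¬ AttainsNorm S := by
  refine ⟨sumOp q, ⟨maxSeq, ⟨norm_maxSeq, ?_⟩, fun hw => ?_⟩, not_attainsNorm_sumOp hq1 hq⟩
  · rw [opNorm_sumOp hq1 hq]
    exact tendsto_norm_sumOp_maxSeq hq1
  -- The zeroth coordinate functional is constantly `1 / √2` along the sequence.
  · have h := hw (lp.evalCLM ℝ (fun _ : ℕ => ℝ) 2 0)
    have h' : Tendsto (fun _ : ℕ => (√2)⁻¹) atTop (𝓝 0) := h.congr maxSeq_zero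
    have h0 := tendsto_nhds_unique h' tendsto_const_nhds
    exact absurd h0.symm (by positivity)
end

section
/- Let F be a Banach space. Then the following are equivalent: (a) for every reflexive Banach space E, the pair (E, F) has the weak maximizing property; (b) F has the Schur property. -/
/-!
**Schur implies the property.** A sequence of unit vectors in a reflexive space has a weakly
convergent subsequence (`ReflexiveSpace.exists_weak_subseq`). An operator into a Schur space maps it
to a norm convergent one, so the weak limit of a maximizing sequence attains the norm
(`SchurProperty.wmp`).

**The converse.** Suppose `F` is not Schur and let `y` be a weakly null sequence of unit vectors.

The factorization of Davis, Figiel, Johnson and Pełczyński shows that `y` is the image `T (e n)` of a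
bounded sequence in a reflexive space `X` under an injective operator `T` (`exists_reflexive_lift`).
Here `G` is the closed span of `y`, and `X` consists of the `x` in `G` whose gauges with respect to
the absolutely convex hulls of `2 ^ n • {y k} ∪ 2 ^ (-n) • B` form an `ℓ²` sequence. Each such gauge
is the supremum of `|g x|` over a set of functionals `g`, and `X` is realised as a closed subspace of
`G × ℓ²` (`diagSpace`). For reflexivity, a functional on `X*` induces a functional on `G*` bounded on
all these polars; by Hahn–Banach and the duality between `c₀` and `ℓ¹` it is a norm limit of
evaluations at points of `G` (`exists_eval_of_bounded`), hence an evaluation itself, and the density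
of `G*` in `X*` finishes the argument (`diagSpace_reflexive`).

Choose functionals `g k` in the unit ball separating the points of the separable space `G`, and put
`p z = ∑ 2 ^ (-k) |g k z|`. Renorm `X × ℝ` by `max |t| (max (ε ‖x‖) (‖T x‖ + p (T x)))` with `ε` small,
and let `S (x, t) = T x`. Since `p (y n) → 0`, the unit vectors `((1 + p (y n))⁻¹ • e n, 1)` are
maximizing with `‖S‖ = 1`; they are not weakly null because of the second coordinate. A unit vector
with `‖T x‖ = 1` would satisfy `p (T x) = 0`, thus `T x = 0`, so `S` does not attain its norm
(`exists_not_wmp`). As `X × ℝ` injects into a countable product of lines, it has a copy in every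
universe (`exists_renorm`).
-/

open Filter Topology

/-- `F` has the Schur property: weakly null sequences are norm null. -/
def SchurProperty (F : Type*) [NormedAddCommGroup F] [NormedSpace ℝ F] : Prop :=
  ∀ x : ℕ → F, WeaklyNull x → Tendsto (fun n => ‖x n‖) atTop (𝓝 0)

/-- A normed space is reflexive if the canonical embedding into its bidual is surjective. -/
def ReflexiveSpace (E : Type*) [NormedAddCommGroup E] [NormedSpace ℝ E] : Prop :=
  Function.Surjective (NormedSpace.inclusionInDoubleDual ℝ E)

/-! ### Weak sequential compactness and the Schur property -/

lemma mem_of_forall_dual {E : Type*} [NormedAddCommGroup E] [NormedSpace ℝ E]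
    {M : Submodule ℝ E} (hM : IsClosed (M : Set E)) {x : E}
    (h : ∀ f : E →L[ℝ] ℝ, (∀ m ∈ M, f m = 0) → f x = 0) : x ∈ M := by
  by_contra hx
  obtain ⟨f, u, hfx, hfM⟩ := geometric_hahn_banach_point_closed M.convex hM hx
  have hu : u < 0 := by simpa using hfM 0 M.zero_mem
  have h0 : f x = 0 := h f fun m hm => by
    by_contra hne
    have h1 := hfM (((u - 1) / f m) • m) (M.smul_mem _ hm)
    rw [map_smul, smul_eq_mul, div_mul_cancel₀ _ hne] at h1
    linarith
  linarith

lemma exists_separating_seq {E : Type*} [NormedAddCommGroup E] [NormedSpace ℝ E]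
    {M : Submodule ℝ E} (hM : TopologicalSpace.IsSeparable (M : Set E)) :
    ∃ g : ℕ → (E →L[ℝ] ℝ), (∀ k, ‖g k‖ ≤ 1) ∧ ∀ x ∈ M, (∀ k, g k x = 0) → x = 0 := by
  obtain ⟨c, hc, hMc⟩ := hM
  obtain ⟨d, hd⟩ := (hc.insert 0).exists_eq_range (Set.insert_nonempty 0 c)
  choose g hg1 hg using fun k => exists_dual_vector'' ℝ (d k)
  refine ⟨g, hg1, fun x hx h0 => ?_⟩
  by_contra hne
  have hpos : 0 < ‖x‖ := norm_pos_iff.2 hne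
  obtain ⟨b, hb, hxb⟩ := Metric.mem_closure_iff.1 (hMc hx) (‖x‖ / 3) (by positivity)
  obtain ⟨k, rfl⟩ : b ∈ Set.range d := hd ▸ Set.mem_insert_of_mem _ hb
  rw [dist_eq_norm] at hxb
  have h1 : ‖d k‖ ≤ ‖x - d k‖ := by
    have h2 : g k (x - d k) = -‖d k‖ := by rw [map_sub, h0, hg]; simp
    have h3 := (g k).le_of_opNorm_le (hg1 k) (x - d k)
    rw [h2] at h3
    simpa using h3
  have h4 : ‖x‖ ≤ ‖x - d k‖ + ‖d k‖ := by simpa using norm_add_le (x - d k) (d k)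
  linarith

lemma isSeparable_closedSpan {E : Type*} [NormedAddCommGroup E] [NormedSpace ℝ E] (x : ℕ → E) :
    TopologicalSpace.IsSeparable
      ((Submodule.span ℝ (Set.range x)).topologicalClosure : Set E) := by
  rw [Submodule.topologicalClosure_coe]
  exact ((Set.countable_range x).isSeparable.span (R := ℝ)).closure

/-- Sequential weak compactness of the unit ball of a reflexive space. Along an ultrafilter,
reflexivity supplies a weak limit in the closed span `M` of the sequence; a diagonal subsequence
along which countably many functionals separating the points of `M` converge has only one
ultrafilter limit. -/
lemma ReflexiveSpace.exists_weak_subseq {E : Type*} [NormedAddCommGroup E] [NormedSpace ℝ E]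
    (hE : ReflexiveSpace E) (x : ℕ → E) (hx : ∀ n, ‖x n‖ ≤ 1) :
    ∃ (z : E) (s : ℕ → ℕ), StrictMono s ∧
      ∀ f : E →L[ℝ] ℝ, Tendsto (fun n => f (x (s n))) atTop (𝓝 (f z)) := by
  set M := (Submodule.span ℝ (Set.range x)).topologicalClosure with hMdef
  have hMc : IsClosed (M : Set E) := Submodule.isClosed_topologicalClosure _
  have hxM : ∀ n, x n ∈ M := fun n =>
    Submodule.le_topologicalClosure _ (Submodule.subset_span ⟨n, rfl⟩)
  obtain ⟨g, hg1, hg⟩ := exists_separating_seq (isSeparable_closedSpan x)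
  have hbd : ∀ (f : E →L[ℝ] ℝ) n, f (x n) ∈ Set.Icc (-‖f‖) ‖f‖ := fun f n => by
    have := f.le_of_opNorm_le_of_le le_rfl (hx n)
    rw [mul_one, Real.norm_eq_abs] at this
    exact abs_le.1 this
  obtain ⟨a, -, s, hs, hsa⟩ := (isCompact_univ_pi fun k : ℕ =>
    (isCompact_Icc : IsCompact (Set.Icc (-‖g k‖) ‖g k‖))).tendsto_subseq
    (x := fun n k => g k (x n)) fun n k _ => hbd (g k) n
  rw [tendsto_pi_nhds] at hsa
  have key : ∀ U : Ultrafilter ℕ, ∃ z ∈ M,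
      ∀ f : E →L[ℝ] ℝ, Tendsto (fun n => f (x (s n))) U (𝓝 (f z)) := by
    intro U
    have hl : ∀ f : E →L[ℝ] ℝ, ∃ l ∈ Set.Icc (-‖f‖) ‖f‖,
        Tendsto (fun n => f (x (s n))) U (𝓝 l) := fun f =>
      isCompact_Icc.ultrafilter_le_nhds (U.map fun n => f (x (s n)))
        (le_principal_iff.2 (mem_map.2 (univ_mem' fun n => hbd f (s n))))
    choose L hL hLt using hl
    let Φ : (E →L[ℝ] ℝ) →ₗ[ℝ] ℝ :=
      { toFun := L
        map_add' := fun f f' => tendsto_nhds_unique (hLt _) ((hLt f).add (hLt f'))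
        map_smul' := fun c f => tendsto_nhds_unique (hLt _) ((hLt f).const_mul c) }
    obtain ⟨z, hz⟩ := hE (Φ.mkContinuous 1 fun f => by
      rw [one_mul]; exact abs_le.2 (hL f))
    have hzL : ∀ f : E →L[ℝ] ℝ, f z = L f := fun f => by
      rw [← NormedSpace.dual_def, hz]; rfl
    refine ⟨z, mem_of_forall_dual hMc fun f hf => ?_, fun f => hzL f ▸ hLt f⟩
    rw [hzL]
    refine tendsto_nhds_unique (hLt f) ?_
    simp [hf _ (hxM _)]
  obtain ⟨z, hzM, hz⟩ := key (Ultrafilter.of atTop)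
  refine ⟨z, s, hs, fun f => ?_⟩
  rw [tendsto_iff_ultrafilter]
  intro U hU
  obtain ⟨w, hwM, hw⟩ := key U
  have hwz : w - z = 0 := hg _ (M.sub_mem hwM hzM) fun k => by
    rw [map_sub, tendsto_nhds_unique (hw (g k)) ((hsa k).mono_left hU),
      tendsto_nhds_unique (hz (g k)) ((hsa k).mono_left (Ultrafilter.of_le _)), sub_self]
  rw [← sub_eq_zero.1 hwz]
  exact hw f

/-- A weak cluster point of any maximizing sequence is a point where the norm is attained, since
`T` turns the weak convergence into norm convergence. -/
lemma SchurProperty.wmp {E F : Type*} [NormedAddCommGroup E] [NormedSpace ℝ E]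
    [NormedAddCommGroup F] [NormedSpace ℝ F] (hF : SchurProperty F) (hE : ReflexiveSpace E) :
    WMP E F := by
  rintro T ⟨x, ⟨hx1, hxT⟩, -⟩
  by_cases hT : ‖T‖ = 0
  · refine ⟨x 0, hx1 0, ?_⟩
    rw [norm_eq_zero.1 hT]; simp
  obtain ⟨z, s, hs, hz⟩ := hE.exists_weak_subseq x fun n => (hx1 n).le
  have hnull : Tendsto (fun n => ‖T (x (s n)) - T z‖) atTop (𝓝 0) := hF _ fun f => by
    simpa using (hz (f.comp T)).sub_const (f (T z))
  have hlim : Tendsto (fun n => ‖T (x (s n))‖) atTop (𝓝 ‖T z‖) :=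
    (tendsto_iff_norm_sub_tendsto_zero.2 hnull).norm
  have hTz : ‖T z‖ = ‖T‖ := tendsto_nhds_unique hlim (hxT.comp hs.tendsto_atTop)
  refine ⟨z, le_antisymm ?_ ?_, hTz⟩
  · obtain ⟨f, hf1, hfz⟩ := exists_dual_vector'' ℝ z
    have h1 : f z ≤ 1 := le_of_tendsto (hz f) (Eventually.of_forall fun n => by
      have := f.le_of_opNorm_le_of_le hf1 (hx1 (s n)).le
      exact (le_abs_self _).trans (by simpa using this))
    rw [hfz] at h1; simpa using h1
  · have := T.le_opNorm z
    rw [hTz] at this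
    have hpos : 0 < ‖T‖ := lt_of_le_of_ne (norm_nonneg _) (Ne.symm hT)
    exact le_of_mul_le_mul_left (by linarith) hpos

/-! ### `ℓ²`-sums of normed spaces -/

lemma lp_two_hasSum {V : ℕ → Type*} [∀ n, NormedAddCommGroup (V n)] (w : lp V 2) :
    HasSum (fun n => ‖w n‖ ^ 2) (‖w‖ ^ 2) := by
  have := lp.hasSum_norm (p := 2) (by norm_num) w
  simpa using this

/-- Head and tail of an `ℓ²`-sum are orthogonal, which bounds the norm of a combination. -/
lemma lp_two_norm_head_tail {V : ℕ → Type*} [∀ n, NormedAddCommGroup (V n)]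
    [∀ n, NormedSpace ℝ (V n)] (u v : lp V 2) (a b : ℝ) (m : ℕ) :
    ‖a • (∑ n ∈ Finset.range m, lp.single 2 n (u n)) +
      b • (v - ∑ n ∈ Finset.range m, lp.single 2 n (v n))‖ ^ 2 ≤
      a ^ 2 * ‖u‖ ^ 2 + b ^ 2 * ‖v‖ ^ 2 := by
  refine hasSum_le (fun n => ?_) (lp_two_hasSum _)
    (((lp_two_hasSum u).mul_left (a ^ 2)).add ((lp_two_hasSum v).mul_left (b ^ 2)))
  have hP : ∀ w : lp V 2, (∑ n ∈ Finset.range m, lp.single 2 n (w n) : lp V 2) n =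
      if n < m then w n else 0 := fun w => by
    rw [lp.coeFn_sum]
    simp only [lp.coeFn_single, Finset.sum_apply, Finset.sum_pi_single, Finset.mem_range]
  rw [lp.coeFn_add, Pi.add_apply, lp.coeFn_smul, lp.coeFn_smul, Pi.smul_apply, Pi.smul_apply,
    lp.coeFn_sub, Pi.sub_apply, hP, hP]
  split_ifs with h
  · rw [sub_self, smul_zero, add_zero, norm_smul, mul_pow, Real.norm_eq_abs, sq_abs]
    nlinarith [sq_nonneg (b * ‖v n‖)]
  · rw [sub_zero, smul_zero, zero_add, norm_smul, mul_pow, Real.norm_eq_abs, sq_abs]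
    nlinarith [sq_nonneg (a * ‖u n‖)]

/-- A functional on an `ℓ²`-sum is the norm limit of its restrictions to the finite heads: a head
nearly norming `f` leaves, by orthogonality, little room for `f` on the tail. -/
lemma lp_two_functional_tail {V : ℕ → Type*} [∀ n, NormedAddCommGroup (V n)]
    [∀ n, NormedSpace ℝ (V n)] (f : lp V 2 →L[ℝ] ℝ) {ε : ℝ} (hε : 0 < ε) :
    ∃ m : ℕ, ∀ w : lp V 2,
      |f w - f (∑ n ∈ Finset.range m, lp.single 2 n (w n))| ≤ ε * ‖w‖ := by
  obtain ⟨r, hr0, hrf, hr⟩ : ∃ r : ℝ, 0 ≤ r ∧ (r < ‖f‖ ∨ f = 0) ∧ ‖f‖ ^ 2 < r ^ 2 + ε ^ 2 := by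
    by_cases hf : f = 0
    · exact ⟨0, le_rfl, Or.inr hf, by simp [hf]; positivity⟩
    have hN : 0 < ‖f‖ := norm_pos_iff.2 hf
    refine ⟨max 0 (‖f‖ - ε ^ 2 / (4 * ‖f‖)), le_max_left _ _,
      Or.inl (max_lt hN (by linarith [show 0 < ε ^ 2 / (4 * ‖f‖) by positivity])), ?_⟩
    have hd : ε ^ 2 / (4 * ‖f‖) * ‖f‖ = ε ^ 2 / 4 := by field_simp
    have hd0 : 0 < ε ^ 2 / (4 * ‖f‖) := by positivity
    have hε2 : 0 < ε ^ 2 := by positivity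
    rcases max_cases 0 (‖f‖ - ε ^ 2 / (4 * ‖f‖)) with ⟨h1, h2⟩ | ⟨h1, h2⟩ <;> rw [h1] <;>
      nlinarith
  rcases hrf with hrf | hf
  swap
  · exact ⟨0, fun w => by simp [hf]; positivity⟩
  obtain ⟨u, hu1, hu⟩ := f.exists_lt_apply_of_lt_opNorm hrf
  have hlim : Tendsto (fun m => ‖f (∑ n ∈ Finset.range m, lp.single 2 n (u n))‖) atTop
      (𝓝 ‖f u‖) :=
    ((f.continuous.tendsto _).comp (lp.hasSum_single (by norm_num) u).tendsto_sum_nat).norm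
  obtain ⟨m, hm⟩ := (hlim.eventually_const_lt hu).exists
  refine ⟨m, fun w => ?_⟩
  by_contra! hw
  have hwpos : 0 < ‖w‖ := by
    rw [norm_pos_iff]; rintro rfl; simp at hw
  set v : lp V 2 := ‖w‖⁻¹ • w with hv
  have hv1 : ‖v‖ = 1 := by rw [hv, norm_smul, norm_inv, norm_norm, inv_mul_cancel₀ hwpos.ne']
  set Pu : lp V 2 := ∑ n ∈ Finset.range m, lp.single 2 n (u n) with hPu
  set Qv : lp V 2 := v - ∑ n ∈ Finset.range m, lp.single 2 n (v n) with hQv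
  have hQ : Qv = ‖w‖⁻¹ • (w - ∑ n ∈ Finset.range m, lp.single 2 n (w n)) := by
    rw [hQv, hv, smul_sub, Finset.smul_sum]
    simp
  have hfQ : ε < |f Qv| := by
    rw [hQ, map_smul, map_sub, smul_eq_mul, abs_mul, abs_inv, abs_norm, lt_inv_mul_iff₀ hwpos]
    linarith
  rw [Real.norm_eq_abs] at hm
  have hsgn : ∀ t c : ℝ, ∃ a : ℝ, a ^ 2 = c ^ 2 ∧ a * t = c * |t| := fun t c => by
    rcases abs_choice t with h | h <;> rw [h]
    · exact ⟨c, rfl, rfl⟩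
    · exact ⟨-c, by ring, by ring⟩
  obtain ⟨a, ha, hat⟩ := hsgn (f Pu) r
  obtain ⟨b, hb, hbt⟩ := hsgn (f Qv) ε
  have h1 : r ^ 2 + ε ^ 2 ≤ f (a • Pu + b • Qv) := by
    rw [map_add, map_smul, map_smul, smul_eq_mul, smul_eq_mul, hat, hbt]
    nlinarith
  have h2 : ‖a • Pu + b • Qv‖ ^ 2 ≤ r ^ 2 + ε ^ 2 := by
    refine (lp_two_norm_head_tail u v a b m).trans ?_
    rw [ha, hb, hv1]
    have : ‖u‖ ^ 2 ≤ 1 := by nlinarith [norm_nonneg u]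
    nlinarith [sq_nonneg r]
  have h3 : f (a • Pu + b • Qv) ≤ ‖f‖ * ‖a • Pu + b • Qv‖ :=
    (le_abs_self _).trans (f.le_opNorm _)
  have hc : 0 < r ^ 2 + ε ^ 2 := by positivity
  have h4 : (r ^ 2 + ε ^ 2) ^ 2 ≤ ‖f‖ ^ 2 * (r ^ 2 + ε ^ 2) := by
    calc (r ^ 2 + ε ^ 2) ^ 2 ≤ (‖f‖ * ‖a • Pu + b • Qv‖) ^ 2 :=
          pow_le_pow_left₀ hc.le (h1.trans h3) 2
      _ = ‖f‖ ^ 2 * ‖a • Pu + b • Qv‖ ^ 2 := mul_pow _ _ _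
      _ ≤ _ := by gcongr
  nlinarith

/-! ### Functionals on the dual that are evaluations at a point -/

open scoped ZeroAtInfty BoundedContinuousFunction

/-- A null sequence as an element of `c₀`, the latter being `C₀(ℕ, ℝ)`. -/
def nullSeq (c : ℕ → ℝ) (hc : Tendsto c atTop (𝓝 0)) : C₀(ℕ, ℝ) where
  toFun := c
  continuous_toFun := continuous_of_discreteTopology
  zero_at_infty' := by rwa [cocompact_eq_cofinite, Nat.cofinite_eq_atTop]

@[simp] lemma nullSeq_apply (c : ℕ → ℝ) (hc : Tendsto c atTop (𝓝 0)) (k : ℕ) :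
    nullSeq c hc k = c k := rfl

lemma c0_norm_le {c : C₀(ℕ, ℝ)} {C : ℝ} (hC : 0 ≤ C) : ‖c‖ ≤ C ↔ ∀ k, |c k| ≤ C := by
  rw [← ZeroAtInftyContinuousMap.norm_toBCF_eq_norm, BoundedContinuousFunction.norm_le hC]
  rfl

/-- The first `m` terms of a sequence, as an element of `c₀`. -/
def headSeq (c : ℕ → ℝ) (m : ℕ) : C₀(ℕ, ℝ) :=
  nullSeq (fun k => if k < m then c k else 0) <| by
    refine tendsto_const_nhds.congr' ?_
    filter_upwards [eventually_ge_atTop m] with k hk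
    rw [if_neg (not_lt.2 hk)]

lemma headSeq_apply (c : ℕ → ℝ) (m k : ℕ) :
    headSeq c m k = if k < m then c k else 0 := rfl

/-- Functionals on `c₀` are given by absolutely summable sequences. -/
lemma c0_dual_repr (μ : C₀(ℕ, ℝ) →L[ℝ] ℝ) :
    ∃ a : ℕ → ℝ, Summable (fun k => |a k|) ∧ ∀ c : C₀(ℕ, ℝ), HasSum (fun k => a k * c k) (μ c) := by
  let δ : ℕ → C₀(ℕ, ℝ) := fun k => headSeq 1 (k + 1) - headSeq 1 k
  have hhead : ∀ (b : ℕ → ℝ) m, μ (headSeq b m) = ∑ k ∈ Finset.range m, μ (δ k) * b k := by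
    intro b m
    induction m with
    | zero =>
      have : headSeq b 0 = 0 := by ext k; simp [headSeq_apply]
      simp [this]
    | succ m ih =>
      have : headSeq b (m + 1) = headSeq b m + b m • δ m := by
        ext k
        simp only [δ, headSeq_apply, ZeroAtInftyContinuousMap.coe_add, Pi.add_apply,
          ZeroAtInftyContinuousMap.coe_smul, Pi.smul_apply, ZeroAtInftyContinuousMap.coe_sub,
          Pi.sub_apply, smul_eq_mul, Pi.one_apply]
        rcases lt_trichotomy k m with h | h | h
        · simp [h, h.trans (Nat.lt_succ_self m)]
        · simp [h]
        · simp [h.not_gt, not_le.2 h]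
      rw [this, map_add, ih, Finset.sum_range_succ, map_smul, smul_eq_mul, mul_comm (b m)]
  have hsum : Summable fun k => |μ (δ k)| := by
    refine summable_of_sum_range_le (c := ‖μ‖) (fun _ => abs_nonneg _) fun m => ?_
    have h1 : ∑ k ∈ Finset.range m, |μ (δ k)| =
        μ (headSeq (fun k => SignType.sign (μ (δ k))) m) := by
      rw [hhead]
      exact Finset.sum_congr rfl fun k _ => (self_mul_sign _).symm
    rw [h1]
    refine (le_abs_self _).trans ?_
    have h2 : ‖headSeq (fun k => (SignType.sign (μ (δ k)) : ℝ)) m‖ ≤ 1 := by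
      rw [c0_norm_le zero_le_one]
      intro k
      rw [headSeq_apply]
      split_ifs
      · rcases SignType.trichotomy (SignType.sign (μ (δ k))) with h | h | h <;> rw [h] <;> simp
      · simp
    simpa using μ.le_of_opNorm_le_of_le le_rfl h2
  refine ⟨fun k => μ (δ k), hsum, fun c => ?_⟩
  have hs : Summable fun k => μ (δ k) * c k := by
    refine Summable.of_norm_bounded (hsum.mul_right ‖c‖) fun k => ?_
    rw [Real.norm_eq_abs, abs_mul]
    gcongr
    exact (c0_norm_le (norm_nonneg c)).1 le_rfl k
  have hc0 : Tendsto c atTop (𝓝 0) := by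
    have := c.zero_at_infty'
    rwa [cocompact_eq_cofinite, Nat.cofinite_eq_atTop] at this
  have hlim : Tendsto (fun m => headSeq c m) atTop (𝓝 c) := by
    rw [Metric.tendsto_atTop]
    intro ε hε
    obtain ⟨m, hm⟩ := Metric.tendsto_atTop.1 hc0 (ε / 2) (half_pos hε)
    refine ⟨m, fun n hn => lt_of_le_of_lt ?_ (half_lt_self hε)⟩
    rw [dist_eq_norm, c0_norm_le (half_pos hε).le]
    intro k
    rw [ZeroAtInftyContinuousMap.coe_sub, Pi.sub_apply, headSeq_apply]
    split_ifs with h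
    · simpa using (half_pos hε).le
    · have := hm k (hn.trans (not_lt.1 h))
      rw [dist_zero_right, Real.norm_eq_abs] at this
      simpa using this.le
  have h1 := (μ.continuous.tendsto c).comp hlim
  have h2 := hs.hasSum.tendsto_sum_nat
  have h3 : μ c = ∑' k, μ (δ k) * c k :=
    tendsto_nhds_unique h1 (h2.congr fun m => (hhead c m).symm)
  rw [h3]
  exact hs.hasSum

/-- Hahn–Banach extension of a functional along an injective linear map. -/
lemma exists_extension_of_injective {D H : Type*} [NormedAddCommGroup D] [NormedSpace ℝ D]
    [NormedAddCommGroup H] [NormedSpace ℝ H] (V : D →ₗ[ℝ] H) (hV : Function.Injective V)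
    (Ψ : D →ₗ[ℝ] ℝ) {C : ℝ} (hC : 0 ≤ C) (hΨ : ∀ g, |Ψ g| ≤ C * ‖V g‖) :
    ∃ Λ : H →L[ℝ] ℝ, ‖Λ‖ ≤ C ∧ ∀ g, Λ (V g) = Ψ g := by
  let e := LinearEquiv.ofInjective V hV
  let ψ : LinearMap.range V →ₗ[ℝ] ℝ := Ψ ∘ₗ e.symm.toLinearMap
  have hψ : ∀ g, ψ (e g) = Ψ g := fun g => by simp [ψ]
  have hψb : ∀ p, ‖ψ p‖ ≤ C * ‖p‖ := fun p => by
    obtain ⟨g, rfl⟩ := e.surjective p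
    rw [hψ]
    exact hΨ g
  obtain ⟨Λ, hΛ, hΛn⟩ := exists_extension_norm_eq (LinearMap.range V) (ψ.mkContinuous C hψb)
  exact ⟨Λ, hΛn.trans_le (LinearMap.mkContinuous_norm_le _ hC _),
    fun g => (hΛ (e g)).trans (hψ g)⟩

/-- If `|Ψ g| ≤ C` whenever `‖g‖ ≤ t` and `|g (y k)| ≤ 1 / t` for all `k`, then `Ψ` extends, along
`g ↦ (g / t, t (g (y k))ₖ)`, to a functional of norm at most `C` on `G* × c₀`. Its `c₀` part is
evaluation at a vector of `G`, and its `G*` part has norm at most `C / t`. -/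
lemma exists_approx_of_bounded {G : Type*} [NormedAddCommGroup G] [NormedSpace ℝ G]
    [CompleteSpace G] {y : ℕ → G} (hy1 : ∀ k, ‖y k‖ ≤ 1) (hy : WeaklyNull y)
    (Ψ : (G →L[ℝ] ℝ) →L[ℝ] ℝ) {C t : ℝ} (hC : 0 ≤ C) (ht : 0 < t)
    (h : ∀ g : G →L[ℝ] ℝ, ‖g‖ ≤ t → (∀ k, |g (y k)| ≤ t⁻¹) → |Ψ g| ≤ C) :
    ∃ x : G, ∀ g : G →L[ℝ] ℝ, |Ψ g - g x| ≤ C * t⁻¹ * ‖g‖ := by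
  let V : (G →L[ℝ] ℝ) →ₗ[ℝ] (G →L[ℝ] ℝ) × C₀(ℕ, ℝ) :=
    { toFun := fun g => (t⁻¹ • g, t • nullSeq (fun k => g (y k)) (hy g))
      map_add' := fun g g' => by
        refine Prod.ext (smul_add _ _ _) ?_
        ext k
        simp [mul_add]
      map_smul' := fun c g => by
        refine Prod.ext (smul_comm _ _ _) ?_
        ext k
        simp [mul_left_comm] }
  have hVinj : Function.Injective V := fun g g' hgg => by
    have h1 : t⁻¹ • g = t⁻¹ • g' := congrArg Prod.fst hgg
    exact smul_right_injective _ (inv_ne_zero ht.ne') h1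
  have hVbound : ∀ g, |Ψ g| ≤ C * ‖V g‖ := by
    intro g
    by_cases hg : V g = 0
    · rw [hVinj (hg.trans (map_zero V).symm)]; simp
    have hm : 0 < ‖V g‖ := norm_pos_iff.2 hg
    have h1 : t⁻¹ * ‖g‖ ≤ ‖V g‖ := by
      have := norm_fst_le (V g)
      rwa [show (V g).1 = t⁻¹ • g from rfl, norm_smul, norm_inv, Real.norm_of_nonneg ht.le] at this
    have h2 : ∀ k, t * |g (y k)| ≤ ‖V g‖ := fun k => by
      have := (c0_norm_le (norm_nonneg _)).1 (norm_snd_le (V g)) k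
      rwa [show (V g).2 k = t * g (y k) from rfl, abs_mul, abs_of_pos ht] at this
    have h3 := h (‖V g‖⁻¹ • g) ?_ fun k => ?_
    · rw [map_smul, smul_eq_mul, abs_mul, abs_inv, abs_norm, inv_mul_le_iff₀ hm] at h3
      linarith
    · rw [norm_smul, norm_inv, norm_norm, inv_mul_le_iff₀ hm]
      rw [inv_mul_le_iff₀ ht] at h1
      linarith
    · rw [smul_apply, smul_eq_mul, abs_mul, abs_inv, abs_norm, inv_mul_le_iff₀ hm, mul_comm,
        le_inv_mul_iff₀ ht]
      exact h2 k
  obtain ⟨Λ, hΛC, hΛV⟩ := exists_extension_of_injective V hVinj Ψ.toLinearMap hC hVbound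
  obtain ⟨a, ha, hμ⟩ := c0_dual_repr (Λ.comp (ContinuousLinearMap.inr ℝ _ _))
  have hsx : Summable fun k => (t * a k) • y k := by
    refine Summable.of_norm_bounded (ha.mul_left t) fun k => ?_
    rw [norm_smul, Real.norm_eq_abs, abs_mul, abs_of_pos ht]
    exact mul_le_of_le_one_right (by positivity) (hy1 k)
  refine ⟨∑' k, (t * a k) • y k, fun g => ?_⟩
  have h1 : g (∑' k, (t * a k) • y k) = Λ (0, (V g).2) := by
    refine ((g.hasSum hsx.hasSum).unique ?_)
    have : HasSum (fun k => a k * (V g).2 k) (Λ (0, (V g).2)) := hμ (V g).2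
    convert this using 1
    funext k
    rw [map_smul, smul_eq_mul, show (V g).2 k = t * g (y k) from rfl]
    ring
  have h2 : Ψ g - g (∑' k, (t * a k) • y k) = Λ (t⁻¹ • g, 0) := by
    rw [h1, show Ψ g = Λ (V g) from (hΛV g).symm, ← map_sub]
    congr 1
    refine Prod.ext ?_ ?_
    · exact sub_zero _
    · exact sub_self _
  rw [h2, mul_assoc]
  have h3 := Λ.le_of_opNorm_le hΛC (t⁻¹ • g, 0)
  rw [Prod.norm_mk, norm_zero, max_eq_left (norm_nonneg _), norm_smul, norm_inv,
    Real.norm_of_nonneg ht.le] at h3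
  exact h3

lemma mem_range_of_isometry {G H : Type*} [NormedAddCommGroup G] [NormedSpace ℝ G]
    [CompleteSpace G] [NormedAddCommGroup H] [NormedSpace ℝ H] (i : G →ₗᵢ[ℝ] H) {z : H}
    (h : ∀ ε > 0, ∃ x, ‖z - i x‖ < ε) : z ∈ Set.range i := by
  rw [← i.isometry.isClosedEmbedding.isClosed_range.closure_eq, Metric.mem_closure_iff]
  intro ε hε
  obtain ⟨x, hx⟩ := h ε hε
  exact ⟨_, ⟨x, rfl⟩, by rwa [dist_eq_norm]⟩

/-- The approximations of `Ψ` by evaluations for `t = 2 ^ n` have error tending to `0`, so `Ψ` lies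
in the closed subspace `G` of `G**`. -/
lemma exists_eval_of_bounded {G : Type*} [NormedAddCommGroup G] [NormedSpace ℝ G]
    [CompleteSpace G] {y : ℕ → G} (hy1 : ∀ k, ‖y k‖ ≤ 1) (hy : WeaklyNull y)
    (Ψ : (G →L[ℝ] ℝ) →L[ℝ] ℝ) {C : ℝ} (hC : 0 ≤ C)
    (h : ∀ (n : ℕ) (g : G →L[ℝ] ℝ), ‖g‖ ≤ 2 ^ n → (∀ k, |g (y k)| ≤ (2 ^ n)⁻¹) → |Ψ g| ≤ C) :
    ∃ x : G, ∀ g : G →L[ℝ] ℝ, Ψ g = g x := by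
  have hmem : Ψ ∈ Set.range (NormedSpace.inclusionInDoubleDualLi ℝ (E := G)) := by
    refine mem_range_of_isometry (G := G) (H := StrongDual ℝ (StrongDual ℝ G))
      (NormedSpace.inclusionInDoubleDualLi ℝ (E := G)) fun ε hε => ?_
    have hlim : Tendsto (fun n : ℕ => C * ((2 : ℝ) ^ n)⁻¹) atTop (𝓝 0) := by
      simpa using (tendsto_inv_atTop_zero.comp
        (tendsto_pow_atTop_atTop_of_one_lt (one_lt_two (α := ℝ)))).const_mul C
    obtain ⟨n, hn⟩ := (hlim.eventually_lt_const hε).exists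
    obtain ⟨x, hx⟩ := exists_approx_of_bounded hy1 hy Ψ hC (by positivity) (h n)
    refine ⟨x, lt_of_le_of_lt ?_ hn⟩
    exact ContinuousLinearMap.opNorm_le_bound _ (by positivity) hx
  obtain ⟨x, hx⟩ := hmem
  exact ⟨x, fun g => by rw [← hx]; rfl⟩

/-! ### Reflexivity of the interpolation space -/

lemma reflexiveSpace_iff {E : Type*} [NormedAddCommGroup E] [NormedSpace ℝ E] :
    ReflexiveSpace E ↔ ∀ φ : (E →L[ℝ] ℝ) →L[ℝ] ℝ, ∃ x : E, ∀ f : E →L[ℝ] ℝ, φ f = f x := by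
  refine ⟨fun h φ => ?_, fun h φ => ?_⟩
  · obtain ⟨x, hx⟩ := h φ
    exact ⟨x, fun f => by rw [← hx]; rfl⟩
  · obtain ⟨x, hx⟩ := h φ
    exact ⟨x, ContinuousLinearMap.ext fun f => (hx f).symm⟩

/-- The vectors `x` of `G` with `(J n x)ₙ` in the `ℓ²`-sum of the spaces `V n`, as the graph of
`x ↦ (J n x)ₙ`. The graph is closed in the product, which makes the space complete. -/
def diagSpace {G : Type*} [NormedAddCommGroup G] [NormedSpace ℝ G] {V : ℕ → Type*}
    [∀ n, NormedAddCommGroup (V n)] [∀ n, NormedSpace ℝ (V n)] (J : ∀ n, G →L[ℝ] V n) :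
    Submodule ℝ (G × lp V 2) where
  carrier := {p | ∀ n, p.2 n = J n p.1}
  add_mem' := fun {p q} hp hq n => by
    rw [Prod.snd_add, Prod.fst_add, lp.coeFn_add, Pi.add_apply, hp n, hq n, map_add]
  zero_mem' := fun n => by simp
  smul_mem' := fun c p hp n => by
    rw [Prod.smul_snd, Prod.smul_fst, lp.coeFn_smul, Pi.smul_apply, hp n, map_smul]

lemma diagSpace_isClosed {G : Type*} [NormedAddCommGroup G] [NormedSpace ℝ G] {V : ℕ → Type*}
    [∀ n, NormedAddCommGroup (V n)] [∀ n, NormedSpace ℝ (V n)] (J : ∀ n, G →L[ℝ] V n) :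
    IsClosed (diagSpace J : Set (G × lp V 2)) := by
  have : (diagSpace J : Set (G × lp V 2)) = ⋂ n, {p | p.2 n = J n p.1} := by
    ext p
    simp only [Set.mem_iInter]
    rfl
  rw [this]
  exact isClosed_iInter fun n => isClosed_eq
    ((lp.evalCLM ℝ V 2 n).continuous.comp continuous_snd) ((J n).continuous.comp continuous_fst)

/-- Half of the Davis–Figiel–Johnson–Pełczyński argument. A functional `φ` on the dual of
`diagSpace J` induces one on `G*` which is bounded on each polar `{g | |g| ≤ ‖J n ·‖}`. If this
forces it to be evaluation at a point `x`, then `x` lies in `diagSpace J` by `ℓ²`-duality, and it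
represents `φ` because `G*` is dense in the dual of `diagSpace J`. -/
lemma diagSpace_reflexive {G : Type*} [NormedAddCommGroup G] [NormedSpace ℝ G] {V : ℕ → Type*}
    [∀ n, NormedAddCommGroup (V n)] [∀ n, NormedSpace ℝ (V n)] (J : ∀ n, G →L[ℝ] V n)
    (hJ : ∀ (Ψ : (G →L[ℝ] ℝ) →L[ℝ] ℝ) (C : ℝ), 0 ≤ C →
      (∀ (n : ℕ) (g : G →L[ℝ] ℝ), (∀ x, |g x| ≤ ‖J n x‖) → |Ψ g| ≤ C) →
      ∃ x : G, ∀ g : G →L[ℝ] ℝ, Ψ g = g x) :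
    ReflexiveSpace (diagSpace J) := by
  rw [reflexiveSpace_iff]
  intro φ
  let j : diagSpace J →L[ℝ] G := (ContinuousLinearMap.fst ℝ G (lp V 2)).comp (diagSpace J).subtypeL
  have hj : ∀ p : diagSpace J, j p = p.1.1 := fun _ => rfl
  have hnorm : ∀ p : diagSpace J, ‖p.1.2‖ ≤ ‖p‖ := fun p => norm_snd_le p.1
  obtain ⟨x, hx⟩ := hJ (φ.comp ((ContinuousLinearMap.compL ℝ (diagSpace J) G ℝ).flip j)) ‖φ‖
    (ContinuousLinearMap.opNorm_nonneg φ) fun n g hg => by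
      have h1 : ‖g.comp j‖ ≤ 1 := ContinuousLinearMap.opNorm_le_bound _ zero_le_one fun p => by
        rw [one_mul]
        refine (hg p.1.1).trans ?_
        rw [← p.2 n]
        exact (lp.norm_apply_le_norm (by norm_num) _ _).trans (hnorm p)
      simpa using φ.le_of_opNorm_le_of_le le_rfl h1
  replace hx : ∀ g : G →L[ℝ] ℝ, φ (g.comp j) = g x := hx
  let H : ℕ → G →L[ℝ] lp V 2 := fun m =>
    ∑ n ∈ Finset.range m, (lp.singleContinuousLinearMap ℝ V 2 n).comp (J n)
  have hH : ∀ m x, H m x = ∑ n ∈ Finset.range m, lp.single 2 n (J n x) := fun m x => by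
    simp [H]
  have hHj : ∀ m (p : diagSpace J), H m (j p) = ∑ n ∈ Finset.range m, lp.single 2 n (p.1.2 n) :=
    fun m p => by
      rw [hH]
      exact Finset.sum_congr rfl fun n _ => by rw [p.2 n, hj]
  have hHle : ∀ m (p : diagSpace J), ‖H m (j p)‖ ≤ ‖p‖ := fun m p => by
    refine le_trans ?_ (hnorm p)
    rw [hHj]
    have := lp_two_norm_head_tail p.1.2 0 1 0 m
    simp only [one_smul, zero_smul, add_zero, one_pow, one_mul] at this
    exact le_of_sq_le_sq (by simpa using this) (norm_nonneg _)
  have hHx : ∀ m, ‖H m x‖ ≤ ‖φ‖ := fun m => by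
    obtain ⟨ψ, hψ1, hψ⟩ := exists_dual_vector'' ℝ (H m x)
    have h1 : ‖(ψ.comp (H m)).comp j‖ ≤ 1 :=
      ContinuousLinearMap.opNorm_le_bound _ zero_le_one fun p => by
        have := ψ.le_of_opNorm_le_of_le hψ1 (hHle m p)
        exact this
    have h2 : φ ((ψ.comp (H m)).comp j) = ‖H m x‖ := by rw [hx]; exact hψ
    have h3 := φ.le_of_opNorm_le_of_le le_rfl h1
    rw [h2] at h3
    simpa using h3
  have hmem : Memℓp (fun n => J n x) 2 := by
    refine memℓp_gen (summable_of_sum_range_le (c := ‖φ‖ ^ 2) (fun _ => by positivity) fun m => ?_)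
    rw [← lp.norm_sum_single (by norm_num), ← hH]
    simpa using pow_le_pow_left₀ (norm_nonneg _) (hHx m) 2
  let z : diagSpace J := ⟨(x, ⟨fun n => J n x, hmem⟩), fun n => rfl⟩
  refine ⟨z, fun f => ?_⟩
  obtain ⟨f', hf', -⟩ := exists_extension_norm_eq (diagSpace J) f
  let f₁ : G →L[ℝ] ℝ := f'.comp (ContinuousLinearMap.inl ℝ G (lp V 2))
  let f₂ : lp V 2 →L[ℝ] ℝ := f'.comp (ContinuousLinearMap.inr ℝ G (lp V 2))
  have hf : ∀ p : diagSpace J, f p = f₁ p.1.1 + f₂ p.1.2 := fun p => by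
    rw [← hf', show f₁ p.1.1 + f₂ p.1.2 = f' (p.1.1, 0) + f' (0, p.1.2) from rfl, ← map_add]
    simp
  have key : ∀ ε > 0, |φ f - f z| ≤ ε * (‖φ‖ + ‖z‖) := by
    intro ε hε
    obtain ⟨m, hm⟩ := lp_two_functional_tail f₂ hε
    let g : G →L[ℝ] ℝ := f₁ + f₂.comp (H m)
    have hg : ∀ p : diagSpace J, |f p - g (j p)| ≤ ε * ‖p‖ := fun p => by
      have : f p - g (j p) =
          f₂ p.1.2 - f₂ (∑ n ∈ Finset.range m, lp.single 2 n (p.1.2 n)) := by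
        rw [hf, ← hHj]
        simp only [g, add_apply, ContinuousLinearMap.comp_apply, hj]
        ring
      rw [this]
      exact (hm _).trans (by gcongr; exact hnorm p)
    have h1 : ‖f - g.comp j‖ ≤ ε := ContinuousLinearMap.opNorm_le_bound _ hε.le hg
    have h2 : φ f - f z = φ (f - g.comp j) - (f z - g (j z)) := by
      rw [map_sub, hx, show g (j z) = g x from rfl]; ring
    rw [h2]
    have h3 := φ.le_of_opNorm_le_of_le le_rfl h1
    rw [Real.norm_eq_abs] at h3
    have h4 := abs_sub (φ (f - g.comp j)) (f z - g (j z))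
    linarith [hg z]
  have h0 : |φ f - f z| ≤ 0 := by
    refine le_of_forall_pos_le_add fun δ hδ => ?_
    have hpos : 0 < ‖φ‖ + ‖z‖ + 1 := by positivity
    have h1 := key (δ / (‖φ‖ + ‖z‖ + 1)) (by positivity)
    refine h1.trans ?_
    rw [zero_add, div_mul_eq_mul_div, div_le_iff₀ hpos]
    nlinarith
  exact sub_eq_zero.1 (abs_eq_zero.1 (le_antisymm h0 (abs_nonneg _)))

/-! ### Lifting a weakly null sequence to a reflexive space -/

/-- The set of functionals `g` of norm at most `2 ^ n` with `|g (y k)| ≤ 2 ^ (-n)` for all `k`: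
the polar of `2 ^ n • W ∪ 2 ^ (-n) • B`, where `W` is the set of the `y k` and `B` the unit
ball. -/
def polarSet {G : Type*} [NormedAddCommGroup G] [NormedSpace ℝ G] (y : ℕ → G) (n : ℕ) :
    Set (G →L[ℝ] ℝ) :=
  {g | ‖g‖ ≤ 2 ^ n ∧ ∀ k, |g (y k)| ≤ (2 ^ n)⁻¹}

/-- `polarMap y n x` is the function `g ↦ g x` on `polarSet y n`; its sup norm is
the gauge at `x` of the absolutely convex hull of `2 ^ n • W ∪ 2 ^ (-n) • B`, with `W`, `B` as in
`polarSet`. -/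
noncomputable def polarMap {G : Type*} [NormedAddCommGroup G] [NormedSpace ℝ G] (y : ℕ → G)
    (n : ℕ) : G →L[ℝ] (polarSet y n →ᵇ ℝ) :=
  LinearMap.mkContinuous
    { toFun := fun x => BoundedContinuousFunction.ofNormedAddCommGroup
        (fun g : polarSet y n => g.1 x) (by fun_prop) (2 ^ n * ‖x‖)
        (fun g => g.1.le_of_opNorm_le g.2.1 x)
      map_add' := fun x x' => by ext g; simp
      map_smul' := fun c x => by ext g; simp }
    (2 ^ n) fun x => BoundedContinuousFunction.norm_ofNormedAddCommGroup_le _ (by positivity)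
      fun g => g.1.le_of_opNorm_le g.2.1 x

lemma polarMap_apply {G : Type*} [NormedAddCommGroup G] [NormedSpace ℝ G] (y : ℕ → G)
    (n : ℕ) (x : G) (g : polarSet y n) : polarMap y n x g = g.1 x := rfl

lemma norm_polarMap_le {G : Type*} [NormedAddCommGroup G] [NormedSpace ℝ G] (y : ℕ → G)
    (n k : ℕ) : ‖polarMap y n (y k)‖ ≤ (2 ^ n)⁻¹ :=
  (BoundedContinuousFunction.norm_le (by positivity)).2 fun g => g.2.2 k

/-- A weakly null sequence in the unit ball is the image of a bounded sequence under an injective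
operator from a reflexive space. -/
lemma exists_reflexive_lift {G : Type v} [NormedAddCommGroup G] [NormedSpace ℝ G]
    [CompleteSpace G] (y : ℕ → G) (hy1 : ∀ k, ‖y k‖ ≤ 1) (hy : WeaklyNull y) :
    ∃ (X : Type v) (_ : NormedAddCommGroup X) (_ : NormedSpace ℝ X), CompleteSpace X ∧
      ReflexiveSpace X ∧ ∃ (T : X →L[ℝ] G) (e : ℕ → X), Function.Injective T ∧
        (∀ k, T (e k) = y k) ∧ ∃ C, ∀ k, ‖e k‖ ≤ C := by
  have hs : Summable fun n : ℕ => (((2 : ℝ) ^ n)⁻¹) ^ 2 := by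
    have : (fun n : ℕ => (((2 : ℝ) ^ n)⁻¹) ^ 2) = fun n => ((1 : ℝ) / 4) ^ n := by
      funext n
      rw [← inv_pow, ← pow_mul, mul_comm, pow_mul]; norm_num
    rw [this]
    exact summable_geometric_of_lt_one (by norm_num) (by norm_num)
  have hle : ∀ k n, ‖polarMap y n (y k)‖ ^ 2 ≤ (((2 : ℝ) ^ n)⁻¹) ^ 2 := fun k n =>
    pow_le_pow_left₀ (norm_nonneg _) (norm_polarMap_le y n k) 2
  have hmem : ∀ k, Memℓp (fun n => polarMap y n (y k)) 2 := fun k =>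
    memℓp_gen (by simpa using Summable.of_nonneg_of_le (fun n => by positivity) (hle k) hs)
  let w : ∀ k, lp (fun n => polarSet y n →ᵇ ℝ) 2 := fun k => ⟨_, hmem k⟩
  have hw : ∀ k, ‖w k‖ ≤ 1 + ∑' n : ℕ, (((2 : ℝ) ^ n)⁻¹) ^ 2 := fun k => by
    have h1 : ‖w k‖ ^ 2 ≤ ∑' n : ℕ, (((2 : ℝ) ^ n)⁻¹) ^ 2 :=
      hasSum_le (hle k) (lp_two_hasSum (w k)) hs.hasSum
    nlinarith [sq_nonneg (‖w k‖ - 1), norm_nonneg (w k)]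
  refine ⟨diagSpace (polarMap y), inferInstance, inferInstance,
    (diagSpace_isClosed _).completeSpace_coe, diagSpace_reflexive _ ?_,
    (ContinuousLinearMap.fst ℝ G _).comp (diagSpace (polarMap y)).subtypeL,
    fun k => ⟨(y k, w k), fun n => rfl⟩, ?_, fun k => rfl,
    1 + ∑' n : ℕ, (((2 : ℝ) ^ n)⁻¹) ^ 2, fun k => ?_⟩
  · intro Ψ C hC h
    refine exists_eval_of_bounded hy1 hy Ψ hC fun n g h1 h2 => h n g fun x => ?_
    exact (polarMap y n x).norm_coe_le_norm ⟨g, h1, h2⟩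
  · intro p q hpq
    refine Subtype.ext (Prod.ext hpq (lp.ext (funext fun n => ?_)))
    rw [p.2 n, q.2 n]
    exact congrArg _ hpq
  · have : 0 ≤ ∑' n : ℕ, (((2 : ℝ) ^ n)⁻¹) ^ 2 := tsum_nonneg fun n => by positivity
    exact max_le ((hy1 k).trans (by linarith)) (hw k)

/-! ### Renorming -/

lemma ReflexiveSpace.of_equiv {X Y : Type*} [NormedAddCommGroup X] [NormedSpace ℝ X]
    [NormedAddCommGroup Y] [NormedSpace ℝ Y] (hX : ReflexiveSpace X) (e : Y ≃L[ℝ] X) :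
    ReflexiveSpace Y := by
  rw [reflexiveSpace_iff] at hX ⊢
  intro φ
  obtain ⟨x, hx⟩ := hX (φ.comp ((ContinuousLinearMap.compL ℝ Y X ℝ).flip (e : Y →L[ℝ] X)))
  refine ⟨e.symm x, fun f => ?_⟩
  have h := hx (f.comp (e.symm : X →L[ℝ] Y))
  rw [ContinuousLinearMap.comp_apply] at h
  have h2 : ((ContinuousLinearMap.compL ℝ Y X ℝ).flip (e : Y →L[ℝ] X))
      (f.comp (e.symm : X →L[ℝ] Y)) = f := by
    ext y
    simp
  rw [h2] at h
  exact h

lemma ReflexiveSpace.prod_real {X : Type*} [NormedAddCommGroup X] [NormedSpace ℝ X]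
    (hX : ReflexiveSpace X) : ReflexiveSpace (X × ℝ) := by
  rw [reflexiveSpace_iff] at hX ⊢
  intro φ
  obtain ⟨x, hx⟩ := hX (φ.comp ((ContinuousLinearMap.compL ℝ (X × ℝ) X ℝ).flip
    (ContinuousLinearMap.fst ℝ X ℝ)))
  refine ⟨(x, φ (ContinuousLinearMap.snd ℝ X ℝ)), fun f => ?_⟩
  have hf : f = (f.comp (ContinuousLinearMap.inl ℝ X ℝ)).comp (ContinuousLinearMap.fst ℝ X ℝ) +
      f (0, 1) • ContinuousLinearMap.snd ℝ X ℝ := by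
    ext y <;> simp [← Prod.zero_eq_mk]
  have h : φ ((f.comp (ContinuousLinearMap.inl ℝ X ℝ)).comp (ContinuousLinearMap.fst ℝ X ℝ)) =
      f (x, 0) := hx (f.comp (ContinuousLinearMap.inl ℝ X ℝ))
  have h2 : f (x, φ (ContinuousLinearMap.snd ℝ X ℝ)) =
      f (x, 0) + φ (ContinuousLinearMap.snd ℝ X ℝ) • f (0, 1) := by
    rw [← map_smul, ← map_add]
    simp
  rw [h2]
  conv_lhs => rw [hf]
  rw [map_add, map_smul, h, smul_eq_mul, smul_eq_mul, mul_comm]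

lemma exists_renorm_aux {X : Type v} [NormedAddCommGroup X] [NormedSpace ℝ X] [CompleteSpace X]
    {S : Type u} [AddCommGroup S] [Module ℝ S] (l : S ≃ₗ[ℝ] X) (hX : ReflexiveSpace X)
    (q : Seminorm ℝ X) {c C : ℝ} (hc : 0 < c)
    (hq1 : ∀ x, c * ‖x‖ ≤ q x) (hq2 : ∀ x, q x ≤ C * ‖x‖) :
    ∃ (E : Type u) (_ : NormedAddCommGroup E) (_ : NormedSpace ℝ E), CompleteSpace E ∧
      ReflexiveSpace E ∧ ∃ e : E ≃L[ℝ] X, ∀ x, ‖x‖ = q (e x) := by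
  let : Norm S := ⟨fun x => q (l x)⟩
  have hn : ∀ x : S, ‖x‖ = q (l x) := fun _ => rfl
  have core : NormedSpace.Core ℝ S :=
    { norm_nonneg := fun x => apply_nonneg q _
      norm_smul := fun r x => by rw [hn, hn, map_smul, map_smul_eq_mul]
      norm_triangle := fun x y => by rw [hn, hn, hn, map_add]; exact map_add_le_add q _ _
      norm_eq_zero_iff := fun x => by
        rw [hn]
        refine ⟨fun h => ?_, fun h => by rw [h, map_zero, map_zero]⟩
        have h1 := hq1 (l x)
        rw [h] at h1
        have h2 : ‖l x‖ ≤ 0 := by nlinarith [norm_nonneg (l x)]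
        exact l.map_eq_zero_iff.1 (norm_le_zero_iff.1 h2) }
  let i1 : NormedAddCommGroup S := NormedAddCommGroup.ofCore core
  let i2 : NormedSpace ℝ S := NormedSpace.ofCore core
  have hl1 : ∀ x, ‖l x‖ ≤ c⁻¹ * ‖x‖ := fun x => by
    rw [hn, ← div_eq_inv_mul, le_div_iff₀ hc, mul_comm]
    exact hq1 _
  have hl2 : ∀ x, ‖l.symm x‖ ≤ C * ‖x‖ := fun x => by
    rw [hn, l.apply_symm_apply]
    exact hq2 _
  let e : S ≃L[ℝ] X := l.toContinuousLinearEquivOfBounds c⁻¹ C hl1 hl2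
  exact ⟨S, i1, i2, (completeSpace_congr (e := e.toEquiv) e.isUniformEmbedding).2 ‹_›,
    hX.of_equiv e, e, fun x => rfl⟩

/-- Given an equivalent norm `q` on a reflexive Banach space, there is a reflexive Banach space,
in any universe containing a copy of the underlying set, isometric to the space with norm `q`. -/
lemma exists_renorm {X : Type v} [NormedAddCommGroup X] [NormedSpace ℝ X] [CompleteSpace X]
    [Small.{u} X] (hX : ReflexiveSpace X) (q : Seminorm ℝ X) {c C : ℝ} (hc : 0 < c)
    (hq1 : ∀ x, c * ‖x‖ ≤ q x) (hq2 : ∀ x, q x ≤ C * ‖x‖) :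
    ∃ (E : Type u) (_ : NormedAddCommGroup E) (_ : NormedSpace ℝ E), CompleteSpace E ∧
      ReflexiveSpace E ∧ ∃ e : E ≃L[ℝ] X, ∀ x, ‖x‖ = q (e x) :=
  exists_renorm_aux (Shrink.linearEquiv ℝ X) hX q hc hq1 hq2

/-! ### An operator that does not attain its norm -/

lemma weighted_term_le {F : Type*} [NormedAddCommGroup F] [NormedSpace ℝ F]
    (g : ℕ → F →L[ℝ] ℝ) (hg : ∀ k, ‖g k‖ ≤ 1) (z : F) (k : ℕ) :
    (1 / 2 : ℝ) ^ k * |g k z| ≤ (1 / 2 : ℝ) ^ k * ‖z‖ :=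
  mul_le_mul_of_nonneg_left (((g k).le_of_opNorm_le (hg k) z).trans_eq (one_mul _)) (by positivity)

lemma weighted_summable {F : Type*} [NormedAddCommGroup F] [NormedSpace ℝ F]
    (g : ℕ → F →L[ℝ] ℝ) (hg : ∀ k, ‖g k‖ ≤ 1) (z : F) :
    Summable fun k => (1 / 2 : ℝ) ^ k * |g k z| :=
  Summable.of_nonneg_of_le (fun k => by positivity) (weighted_term_le g hg z)
    (summable_geometric_two.mul_right _)

/-- The seminorm `z ↦ ∑ₖ 2 ^ (-k) |g k z|`. It is a norm where the functionals `g k` separate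
points, and it tends to `0` along bounded weakly null sequences. -/
noncomputable def weightedSeminorm {F : Type*} [NormedAddCommGroup F] [NormedSpace ℝ F]
    (g : ℕ → F →L[ℝ] ℝ) (hg : ∀ k, ‖g k‖ ≤ 1) : Seminorm ℝ F :=
  Seminorm.of (fun z => ∑' k, (1 / 2 : ℝ) ^ k * |g k z|)
    (fun x y => by
      rw [← (weighted_summable g hg x).tsum_add (weighted_summable g hg y)]
      refine (weighted_summable g hg (x + y)).tsum_le_tsum (fun k => ?_)
        ((weighted_summable g hg x).add (weighted_summable g hg y))
      rw [← mul_add, map_add]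
      exact mul_le_mul_of_nonneg_left (abs_add_le _ _) (by positivity))
    (fun a x => by
      rw [← tsum_mul_left]
      refine tsum_congr fun k => ?_
      rw [map_smul, smul_eq_mul, abs_mul, Real.norm_eq_abs]
      ring)

section weightedSeminorm

variable {F : Type*} [NormedAddCommGroup F] [NormedSpace ℝ F] (g : ℕ → F →L[ℝ] ℝ)
  (hg : ∀ k, ‖g k‖ ≤ 1)

lemma weightedSeminorm_apply (z : F) :
    weightedSeminorm g hg z = ∑' k, (1 / 2 : ℝ) ^ k * |g k z| := rfl

lemma weightedSeminorm_le (z : F) : weightedSeminorm g hg z ≤ 2 * ‖z‖ := by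
  have h := (weighted_summable g hg z).tsum_le_tsum (weighted_term_le g hg z)
    (summable_geometric_two.mul_right _)
  rwa [tsum_mul_right, tsum_geometric_two] at h

lemma weightedSeminorm_pos {z : F} {k : ℕ} (hz : g k z ≠ 0) : 0 < weightedSeminorm g hg z :=
  (weighted_summable g hg z).tsum_pos (fun k => by positivity) k (by positivity)

lemma tendsto_weightedSeminorm {y : ℕ → F} (hy1 : ∀ n, ‖y n‖ = 1) (hy : WeaklyNull y) :
    Tendsto (fun n => weightedSeminorm g hg (y n)) atTop (𝓝 0) := by
  have h : Tendsto (fun n => ∑' k, (1 / 2 : ℝ) ^ k * |g k (y n)|) atTop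
      (𝓝 (∑' _ : ℕ, (0 : ℝ))) := by
    refine tendsto_tsum_of_dominated_convergence (bound := fun k => (1 / 2 : ℝ) ^ k)
      summable_geometric_two (fun k => ?_) (Eventually.of_forall fun n k => ?_)
    · simpa using (hy (g k)).abs.const_mul ((1 / 2 : ℝ) ^ k)
    · rw [Real.norm_of_nonneg (by positivity)]
      simpa [hy1] using weighted_term_le g hg (y n) k
  rwa [tsum_zero] at h

end weightedSeminorm

/-- If a normalised weakly null sequence lifts to a bounded sequence in a reflexive space `X`, then
`X × ℝ` has an equivalent norm for which `(x, t) ↦ T x` has norm one, is not norm attaining, and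
has a maximizing sequence with constant second coordinate `1`. -/
lemma exists_not_wmp {F : Type w} [NormedAddCommGroup F] [NormedSpace ℝ F]
    {X : Type v} [NormedAddCommGroup X] [NormedSpace ℝ X] [CompleteSpace X]
    (hX : ReflexiveSpace X) (T : X →L[ℝ] F) {y : ℕ → F} (hy1 : ∀ n, ‖y n‖ = 1)
    (hy : WeaklyNull y) (e : ℕ → X) (hTe : ∀ n, T (e n) = y n) {C : ℝ} (hC : ∀ n, ‖e n‖ ≤ C)
    (g : ℕ → F →L[ℝ] ℝ) (hg : ∀ k, ‖g k‖ ≤ 1) (hgT : ∀ x, (∀ k, g k (T x) = 0) → x = 0) :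
    ∃ (E : Type u) (_ : NormedAddCommGroup E) (_ : NormedSpace ℝ E), CompleteSpace E ∧
      ReflexiveSpace E ∧ ¬ WMP E F := by
  set p := weightedSeminorm g hg with hp
  -- countably many functionals separate the points of `X`, so `X` embeds in `ℕ → ℝ`
  have : Small.{u} (X × ℝ) := by
    refine small_of_injective (β := (ℕ → ℝ) × ℝ) (f := fun z => (fun k => g k (T z.1), z.2)) ?_
    intro a b hab
    simp only [Prod.mk.injEq] at hab
    refine Prod.ext (sub_eq_zero.1 (hgT _ fun k => ?_)) hab.2
    rw [map_sub, map_sub, congrFun hab.1 k, sub_self]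
  have hC0 : 0 ≤ C := (norm_nonneg _).trans (hC 0)
  let ε : NNReal := ⟨(C + 1)⁻¹, by positivity⟩
  have hε : 0 < (ε : ℝ) := by change 0 < (C + 1)⁻¹; positivity
  have hε1 : (ε : ℝ) ≤ 1 := by
    change (C + 1)⁻¹ ≤ 1
    exact inv_le_one_of_one_le₀ (by linarith)
  have hεe : ∀ n, (ε : ℝ) * ‖e n‖ ≤ 1 := fun n => by
    change (C + 1)⁻¹ * ‖e n‖ ≤ 1
    rw [← div_eq_inv_mul, div_le_one (by positivity)]
    linarith [hC n]
  let q : Seminorm ℝ (X × ℝ) := (normSeminorm ℝ ℝ).comp (LinearMap.snd ℝ X ℝ) ⊔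
    ((ε • normSeminorm ℝ X) ⊔ (normSeminorm ℝ F + p).comp (T : X →ₗ[ℝ] F)).comp
      (LinearMap.fst ℝ X ℝ)
  have hq : ∀ z, q z = max |z.2| (max (ε * ‖z.1‖) (‖T z.1‖ + p (T z.1))) := fun z => rfl
  have hq1 : ∀ z, (ε : ℝ) * ‖z‖ ≤ q z := fun z => by
    rw [hq, Prod.norm_def, mul_max_of_nonneg _ _ hε.le]
    refine max_le ((le_max_left _ _).trans (le_max_right _ _)) (le_trans ?_ (le_max_left _ _))
    exact mul_le_of_le_one_left (norm_nonneg _) hε1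
  have hq2 : ∀ z, q z ≤ (1 + 3 * ‖T‖) * ‖z‖ := fun z => by
    have h1 : ‖z.1‖ ≤ ‖z‖ := norm_fst_le z
    have h2 : ‖z.2‖ ≤ ‖z‖ := norm_snd_le z
    rw [Real.norm_eq_abs] at h2
    have h3 : ‖T z.1‖ ≤ ‖T‖ * ‖z‖ := T.le_of_opNorm_le_of_le le_rfl h1
    have h4 : p (T z.1) ≤ 2 * ‖T z.1‖ := weightedSeminorm_le g hg _
    have h5 : 0 ≤ ‖T‖ * ‖z‖ := by positivity
    have h6 : (ε : ℝ) * ‖z.1‖ ≤ ‖z.1‖ := mul_le_of_le_one_left (norm_nonneg _) hε1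
    have h7 := norm_nonneg z
    rw [hq]
    refine max_le ?_ (max_le ?_ ?_) <;> linarith
  obtain ⟨E, i1, i2, hE1, hE2, L, hL⟩ := exists_renorm.{v, u} hX.prod_real q hε hq1 hq2
  refine ⟨E, i1, i2, hE1, hE2, fun hW => ?_⟩
  let S : E →L[ℝ] F := (T.comp (ContinuousLinearMap.fst ℝ X ℝ)).comp (L : E →L[ℝ] X × ℝ)
  have hS : ∀ x, S x = T (L x).1 := fun _ => rfl
  have hSle : ∀ x, ‖S x‖ + p (S x) ≤ ‖x‖ := fun x => by
    rw [hL, hq, hS]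
    exact (le_max_right _ _).trans (le_max_right _ _)
  have hS1 : ‖S‖ ≤ 1 := S.opNorm_le_bound zero_le_one fun x => by
    linarith [hSle x, apply_nonneg p (S x)]
  let r : ℕ → ℝ := fun n => (1 + p (y n))⁻¹
  have hr0 : ∀ n, 0 < r n := fun n => inv_pos.2 (by linarith [apply_nonneg p (y n)])
  have hr1 : ∀ n, r n ≤ 1 := fun n => inv_le_one_of_one_le₀ (by linarith [apply_nonneg p (y n)])
  let x : ℕ → E := fun n => L.symm (r n • e n, 1)
  have hLx : ∀ n, L (x n) = (r n • e n, 1) := fun n => L.apply_symm_apply _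
  have hSx : ∀ n, S (x n) = r n • y n := fun n => by rw [hS, hLx, map_smul, hTe]
  have hSxn : ∀ n, ‖S (x n)‖ = r n := fun n => by
    rw [hSx, norm_smul, hy1, mul_one, Real.norm_of_nonneg (hr0 n).le]
  have hx1 : ∀ n, ‖x n‖ = 1 := fun n => by
    rw [hL, hq, hLx]
    simp only [abs_one]
    refine max_eq_left (max_le ?_ (le_of_eq ?_))
    · rw [norm_smul, Real.norm_of_nonneg (hr0 n).le]
      nlinarith [hεe n, hr1 n, hr0 n, mul_nonneg hε.le (norm_nonneg (e n))]
    · rw [map_smul, hTe, norm_smul, map_smul_eq_mul, hy1, Real.norm_of_nonneg (hr0 n).le,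
        ← mul_add]
      exact inv_mul_cancel₀ (by linarith [apply_nonneg p (y n)])
  have hr : Tendsto r atTop (𝓝 1) := by
    have h := ((tendsto_weightedSeminorm g hg hy1 hy).const_add 1).inv₀ (by norm_num)
    simpa using h
  have hSn : ‖S‖ = 1 := by
    refine le_antisymm hS1 (le_of_tendsto hr (Eventually.of_forall fun n => ?_))
    simpa [hSxn, hx1] using S.le_opNorm (x n)
  have hnull : ¬ WeaklyNull x := fun h => by
    have h1 := h ((ContinuousLinearMap.snd ℝ X ℝ).comp (L : E →L[ℝ] X × ℝ))
    have h2 : (fun n => ((ContinuousLinearMap.snd ℝ X ℝ).comp (L : E →L[ℝ] X × ℝ)) (x n)) =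
        fun _ => (1 : ℝ) := funext fun n => congrArg Prod.snd (hLx n)
    rw [h2] at h1
    exact one_ne_zero (tendsto_nhds_unique tendsto_const_nhds h1)
  obtain ⟨z, hz1, hz⟩ := hW S ⟨x, ⟨hx1, by simpa only [hSxn, hSn] using hr⟩, hnull⟩
  rw [hSn] at hz
  have hpz : p (S z) ≤ 0 := by linarith [hSle z]
  have hLz : (L z).1 = 0 := hgT _ fun k => by
    by_contra hk
    exact (weightedSeminorm_pos g hg hk).not_ge hpz
  rw [hS, hLz, map_zero, norm_zero] at hz
  exact zero_ne_one hz

/-- A normed space without the Schur property contains a normalised weakly null sequence. -/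
lemma exists_normalized_weaklyNull {F : Type*} [NormedAddCommGroup F] [NormedSpace ℝ F]
    (hF : ¬ SchurProperty F) : ∃ y : ℕ → F, (∀ n, ‖y n‖ = 1) ∧ WeaklyNull y := by
  unfold SchurProperty at hF
  push Not at hF
  obtain ⟨x, hx, hnot⟩ := hF
  rw [Metric.tendsto_atTop] at hnot
  push Not at hnot
  obtain ⟨δ, hδ, h⟩ := hnot
  have h' : ∃ᶠ n in atTop, δ ≤ ‖x n‖ := frequently_atTop.2 fun N => by
    obtain ⟨n, hn, hd⟩ := h N
    exact ⟨n, hn, by simpa using hd⟩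
  obtain ⟨φ, hφ, hδφ⟩ := extraction_of_frequently_atTop h'
  have hpos : ∀ n, 0 < ‖x (φ n)‖ := fun n => hδ.trans_le (hδφ n)
  refine ⟨fun n => ‖x (φ n)‖⁻¹ • x (φ n), fun n => ?_, fun f => ?_⟩
  · rw [norm_smul, norm_inv, norm_norm, inv_mul_cancel₀ (hpos n).ne']
  · have h1 : Tendsto (fun n => δ⁻¹ * |f (x (φ n))|) atTop (𝓝 0) := by
      simpa using (((hx f).comp hφ.tendsto_atTop).abs.const_mul δ⁻¹)
    refine squeeze_zero_norm (fun n => ?_) h1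
    rw [map_smul, smul_eq_mul, norm_mul, norm_inv, norm_norm, Real.norm_eq_abs]
    exact mul_le_mul_of_nonneg_right (inv_anti₀ hδ (hδφ n)) (abs_nonneg _)

theorem statement13 (F : Type v) [NormedAddCommGroup F] [NormedSpace ℝ F] [CompleteSpace F] :
    (∀ (E : Type u) [NormedAddCommGroup E] [NormedSpace ℝ E] [CompleteSpace E],
      ReflexiveSpace E → WMP E F) ↔ SchurProperty F := by
  refine ⟨fun h => ?_, fun hF E _ _ _ hE => hF.wmp hE⟩
  by_contra hF
  obtain ⟨y, hy1, hy⟩ := exists_normalized_weaklyNull hF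
  -- the closed span of the sequence is separable, so countably many functionals separate its points
  let M := (Submodule.span ℝ (Set.range y)).topologicalClosure
  obtain ⟨g, hg1, hg⟩ := exists_separating_seq (M := M) (isSeparable_closedSpan y)
  have hyM : ∀ n, y n ∈ M := fun n =>
    Submodule.le_topologicalClosure _ (Submodule.subset_span ⟨n, rfl⟩)
  have : CompleteSpace M := (Submodule.isClosed_topologicalClosure _).completeSpace_coe
  have hyM' : WeaklyNull fun n => (⟨y n, hyM n⟩ : M) := fun f => by
    obtain ⟨f', hf', -⟩ := exists_extension_norm_eq M f
    exact (hy f').congr fun n => hf' ⟨y n, hyM n⟩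
  obtain ⟨X, _, _, _, hX, T, e, hT, hTe, C, hC⟩ :=
    exists_reflexive_lift (fun n => (⟨y n, hyM n⟩ : M)) (fun n => (hy1 n).le) hyM'
  obtain ⟨E, _, _, _, hE, hW⟩ := exists_not_wmp hX (M.subtypeL.comp T) hy1 hy e
    (fun n => congrArg Subtype.val (hTe n)) hC g hg1 fun x hx =>
      (injective_iff_map_eq_zero T).1 hT x (Subtype.ext (hg _ (T x).2 hx))
  exact hW (h E hE)
end

section
/- Let E be an infinite-dimensional reflexive real Banach space, and let c₀ denote the Banach space of real sequences converging to 0 with the supremum norm. If T : E → c₀ is a bounded linear operator and K : E → c₀ is a compact linear operator such that ‖T‖ < ‖T + K‖, then T + K attains its norm, i.e., there exists x with ‖x‖ = 1 and ‖(T + K) x‖ = ‖T + K‖. -/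
/-!
Write `S = T + K` and let `eₙ : c₀ → ℝ` be the coordinate functionals, so that
`‖S‖ = sup ‖eₙ ∘ S‖`. A relatively compact subset of `c₀` tends to `0` uniformly, hence
compactness of `K` gives `‖eₙ ∘ K‖ → 0` (`eventually_norm_coord_comp_le`). Therefore
`‖eₙ ∘ S‖ ≤ ‖T‖ + ‖eₙ ∘ K‖` stays away from `‖S‖ > ‖T‖` for large `n`, and the supremum is
attained: `‖eₙ ∘ S‖ = ‖S‖` for some `n`. By reflexivity the functional `eₙ ∘ S` attains its
norm at a unit vector (`ReflexiveSpace.exists_attains`), and `S` attains its norm there.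
-/

open Filter Topology

/-- The Banach space `c₀` of real sequences converging to `0`, with the sup norm. -/
noncomputable abbrev czero : Type := ZeroAtInftyContinuousMap ℕ ℝ

lemma czero_abs_apply_le (a : czero) (n : ℕ) : |a n| ≤ ‖a‖ :=
  a.toBCF.norm_coe_le_norm n

lemma czero_norm_le {a : czero} {C : ℝ} (hC : 0 ≤ C) (h : ∀ n, |a n| ≤ C) : ‖a‖ ≤ C :=
  (BoundedContinuousFunction.norm_le (f := a.toBCF) hC).2 h

/-- The `n`-th coordinate functional on `c₀`. -/
noncomputable def coord (n : ℕ) : czero →L[ℝ] ℝ :=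
  LinearMap.mkContinuous
    { toFun := fun a => a n
      map_add' := fun _ _ => rfl
      map_smul' := fun _ _ => rfl } 1
    (fun a => by simpa using czero_abs_apply_le a n)

lemma coord_apply (n : ℕ) (a : czero) : coord n a = a n := rfl

lemma norm_coord_comp_le {E : Type*} [NormedAddCommGroup E] [NormedSpace ℝ E]
    (T : E →L[ℝ] czero) (n : ℕ) : ‖(coord n).comp T‖ ≤ ‖T‖ :=
  ContinuousLinearMap.opNorm_le_bound _ T.opNorm_nonneg fun x =>
    (czero_abs_apply_le (T x) n).trans (T.le_opNorm x)

/-- The coordinate functionals of a compact operator into `c₀` tend to `0` in norm. -/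
lemma eventually_norm_coord_comp_le {E : Type*} [NormedAddCommGroup E] [NormedSpace ℝ E]
    (K : E →L[ℝ] czero) (hK : IsCompactOperator K) {ε : ℝ} (hε : 0 < ε) :
    ∀ᶠ n in atTop, ‖(coord n).comp K‖ ≤ ε := by
  have htb : TotallyBounded (K '' Metric.closedBall 0 1) :=
    (hK.isCompact_closure_image_closedBall (f := (K : E →ₗ[ℝ] czero)) 1).totallyBounded.subset
      subset_closure
  obtain ⟨t, ht, hcov⟩ := Metric.totallyBounded_iff.1 htb (ε / 2) (half_pos hε)
  have hev : ∀ᶠ n in atTop, ∀ y ∈ t, |y n| < ε / 2 := by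
    refine (ht.eventually_all).2 fun y _ => ?_
    have hy : Tendsto (fun n => y n) atTop (𝓝 0) := by
      have := zero_at_infty y
      rwa [cocompact_eq_cofinite, Nat.cofinite_eq_atTop] at this
    simpa using hy.abs.eventually_lt_const (by simpa using half_pos hε)
  filter_upwards [hev] with n hn
  refine ContinuousLinearMap.opNorm_le_of_unit_norm hε.le fun x hx => ?_
  have hmem : K x ∈ K '' Metric.closedBall 0 1 := ⟨x, by simp [hx], rfl⟩
  obtain ⟨y, hy, hxy⟩ := Set.mem_iUnion₂.1 (hcov hmem)
  rw [Metric.mem_ball, dist_eq_norm] at hxy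
  have h1 : |K x n - y n| ≤ ‖K x - y‖ := czero_abs_apply_le (K x - y) n
  have h2 := hn y hy
  have h3 : |K x n| ≤ |K x n - y n| + |y n| := by
    simpa using abs_add_le (K x n - y n) (y n)
  change |K x n| ≤ ε
  linarith

/-- On a reflexive space every nonzero functional attains its norm: a norming element of the
bidual, given by Hahn–Banach, is represented by a unit vector. -/
lemma ReflexiveSpace.exists_attains {E : Type*} [NormedAddCommGroup E] [NormedSpace ℝ E]
    (hrefl : ReflexiveSpace E) (f : E →L[ℝ] ℝ) (hf : f ≠ 0) :
    ∃ x : E, ‖x‖ = 1 ∧ f x = ‖f‖ := by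
  obtain ⟨φ, hφ, hφf⟩ := exists_dual_vector ℝ f (norm_ne_zero_iff.2 hf)
  obtain ⟨x, rfl⟩ := hrefl φ
  refine ⟨x, ?_, by simpa using hφf⟩
  rw [← hφ]
  exact ((NormedSpace.inclusionInDoubleDualLi ℝ (E := E)).norm_map x).symm

theorem statement14 {E : Type*} [NormedAddCommGroup E] [NormedSpace ℝ E] [CompleteSpace E]
    (hinf : ¬ FiniteDimensional ℝ E) (hrefl : ReflexiveSpace E)
    (T K : E →L[ℝ] czero) (hK : IsCompactOperator K) (h : ‖T‖ < ‖T + K‖) :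
    AttainsNorm (T + K) := by
  have hpos : 0 < ‖T + K‖ := (norm_nonneg T).trans_lt h
  obtain ⟨n, hn⟩ : ∃ n, ‖T + K‖ ≤ ‖(coord n).comp (T + K)‖ := by
    by_contra! hlt
    obtain ⟨N, hN⟩ := eventually_atTop.1
      (eventually_norm_coord_comp_le K hK (half_pos (sub_pos.2 h)))
    obtain ⟨m, -, hm⟩ := Finset.exists_max_image (Finset.range (N + 1))
      (fun n => ‖(coord n).comp (T + K)‖) ⟨0, by simp⟩
    -- `C` bounds the coordinates of index at most `N` through `m`, the others through the midpoint.
    set C := max ((‖T‖ + ‖T + K‖) / 2) ‖(coord m).comp (T + K)‖ with hC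
    have hCnn : 0 ≤ C := le_max_of_le_right (norm_nonneg _)
    have hClt : C < ‖T + K‖ := max_lt (by linarith) (hlt m)
    have hbound : ∀ n, ‖(coord n).comp (T + K)‖ ≤ C := by
      intro n
      rcases le_total N n with hn | hn
      · refine le_max_of_le_left ?_
        rw [ContinuousLinearMap.comp_add]
        have h1 := norm_add_le ((coord n).comp T) ((coord n).comp K)
        have h2 := norm_coord_comp_le T n
        have h3 := hN n hn
        linarith
      · exact le_max_of_le_right (hm n (Finset.mem_range.2 (by omega)))
    refine hClt.not_ge (ContinuousLinearMap.opNorm_le_bound _ hCnn fun x => ?_)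
    exact czero_norm_le (by positivity) fun n =>
      ((coord n).comp (T + K)).le_of_opNorm_le (hbound n) x
  obtain ⟨x, hx, hfx⟩ := hrefl.exists_attains ((coord n).comp (T + K))
    (norm_pos_iff.1 (hpos.trans_le hn))
  refine ⟨x, hx, le_antisymm (by simpa [hx] using (T + K).le_opNorm x) ?_⟩
  calc ‖T + K‖ ≤ ‖(coord n).comp (T + K)‖ := hn
    _ = (T + K) x n := hfx.symm
    _ ≤ |(T + K) x n| := le_abs_self _
    _ ≤ ‖(T + K) x‖ := czero_abs_apply_le _ _
end

section
/- Let E be an infinite-dimensional reflexive real Banach space and let c₀ denote the Banach space of real sequences converging to 0 with the supremum norm. Then there exist a Banach space E' and a continuous linear isomorphism (bounded linear bijection with bounded inverse) from E onto E' such that the pair (E', c₀) fails the weak maximizing property: there exists a bounded linear operator S : E' → c₀ which admits a maximizing sequence that does not converge weakly to 0, yet S does not attain its norm. -/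
/-!
Split `E ≃ ℝ × Y` with `Y` a closed hyperplane and give `ℝ × Y` the maximum norm. Suppose `g n` are
functionals on `Y` with `g n → 0` pointwise and `‖g n‖ ≥ 1`, and let `c n` increase strictly to `1`.
The operator `S (t, y) = (c n * g n y / ‖g n‖)ₙ` has norm `1`. It does not attain it: the norm of an
element of `c₀` is attained at some coordinate, and the `n`-th coordinate functional of `S` has norm
`c n < 1`. With `y n` in the unit ball almost norming `g n`, the vectors `(1, y n)` have norm `1`,
form a maximizing sequence, and are not weakly null because of their constant first coordinate
(`exists_operator_prod`).

Such `g n` come from reflexivity. The dual of `Y` is infinite-dimensional, so it contains a bounded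
`1`-separated sequence; extended to `E` by the projection onto `Y`, it has a pointwise convergent
subsequence (`exists_subseq_diff_tendsto_zero`), and the consecutive differences are the `g n`.
-/

open Filter Topology

/-- A closed subspace and a point off it are separated by a functional vanishing on the subspace. -/
lemma exists_functional_vanishing {V : Type*} [NormedAddCommGroup V] [NormedSpace ℝ V]
    (p : Submodule ℝ V) (hp : IsClosed (p : Set V)) {x : V} (hx : x ∉ p) :
    ∃ f : V →L[ℝ] ℝ, (∀ y ∈ p, f y = 0) ∧ f x ≠ 0 := by
  obtain ⟨f, u, hf, hu⟩ := geometric_hahn_banach_closed_point p.convex hp hx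
  have h0 : 0 < u := by simpa using hf 0 p.zero_mem
  refine ⟨f, fun y hy => ?_, (h0.trans hu).ne'⟩
  -- otherwise the multiple `(u / f y) • y`, still in `p`, would have `f`-value `u`
  by_contra hne
  have := hf ((u / f y) • y) (p.smul_mem _ hy)
  rw [map_smul, smul_eq_mul, div_mul_cancel₀ _ hne] at this
  exact lt_irrefl _ this

/-- In a reflexive space, a bounded sequence of functionals has a subsequence whose consecutive
differences tend to `0` pointwise (it even converges pointwise). No separability is assumed:
the functionals live on the quotient by their common kernel, which is separable because its dual,
the closed span of the sequence, is. -/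
lemma exists_subseq_diff_tendsto_zero {E : Type*} [NormedAddCommGroup E] [NormedSpace ℝ E]
    (hrefl : ReflexiveSpace E) (z : ℕ → E →L[ℝ] ℝ) (C : ℝ) (hC : ∀ n, ‖z n‖ ≤ C) :
    ∃ φ : ℕ → ℕ, StrictMono φ ∧
      ∀ x, Tendsto (fun k => (z (φ (k + 1)) - z (φ k)) x) atTop (𝓝 0) := by
  have hC0 : 0 ≤ C := (norm_nonneg _).trans (hC 0)
  set Z : Submodule ℝ (E →L[ℝ] ℝ) := (Submodule.span ℝ (Set.range z)).topologicalClosure with hZ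
  have hZsep : TopologicalSpace.IsSeparable (Z : Set (E →L[ℝ] ℝ)) := by
    rw [hZ, Submodule.topologicalClosure_coe]
    exact ((Set.countable_range z).isSeparable.span).closure
  obtain ⟨c, hc, hZc⟩ := hZsep
  have hnorming : ∀ w : E →L[ℝ] ℝ, ∃ x : E, ‖x‖ ≤ 1 ∧ ‖w‖ / 2 ≤ |w x| := by
    intro w
    rcases (norm_nonneg w).eq_or_lt with h | h
    · exact ⟨0, by simp, by simp [← h]⟩
    · obtain ⟨x, hx, hx'⟩ := w.exists_lt_apply_of_lt_opNorm (half_lt_self h)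
      exact ⟨x, hx.le, by simpa using hx'.le⟩
  choose X hX1 hX2 using hnorming
  have := hc.to_subtype
  -- diagonal extraction along the countable family `X w`, `w ∈ c`
  obtain ⟨a, -, φ, hφ, hlim⟩ :=
    (isCompact_univ_pi (fun _ : c => isCompact_Icc (a := -C) (b := C))).tendsto_subseq
      (x := fun n (w : c) => z n (X w)) (by
        intro n w _
        rw [Set.mem_Icc, ← abs_le]
        calc |z n (X w)| ≤ ‖z n‖ * ‖X w‖ := (z n).le_opNorm _
          _ ≤ C * 1 := mul_le_mul (hC n) (hX1 _) (norm_nonneg _) hC0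
          _ = C := mul_one C)
  refine ⟨φ, hφ, ?_⟩
  set g : ℕ → E →L[ℝ] ℝ := fun k => z (φ (k + 1)) - z (φ k) with hg
  have hgC : ∀ k, ‖g k‖ ≤ C + C := fun k =>
    (norm_sub_le _ _).trans (add_le_add (hC _) (hC _))
  -- the closed subspace on which the differences tend to `0`
  let M : Submodule ℝ E :=
    { carrier := {x | Tendsto (fun k => g k x) atTop (𝓝 0)}
      add_mem' := fun {x y} hx hy => by
        simpa only [Set.mem_ofPred_eq, map_add, add_zero] using Tendsto.add hx hy
      zero_mem' := by simp
      smul_mem' := fun r x hx => by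
        simpa only [Set.mem_ofPred_eq, map_smul, smul_eq_mul, mul_zero] using
          Tendsto.const_mul r hx }
  have hMclosed : IsClosed (M : Set E) := by
    refine isClosed_of_closure_subset fun x hx => ?_
    change Tendsto (fun k => g k x) atTop (𝓝 0)
    rw [Metric.tendsto_atTop]
    intro ε hε
    have hD : 0 < 2 * (C + C + 1) := by linarith
    obtain ⟨y, hy, hxy⟩ := Metric.mem_closure_iff.1 hx (ε / (2 * (C + C + 1))) (by positivity)
    obtain ⟨N, hN⟩ := Metric.tendsto_atTop.1 (show Tendsto (fun k => g k y) atTop (𝓝 0) from hy)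
      (ε / 2) (by positivity)
    refine ⟨N, fun n hn => ?_⟩
    have h1 := hN n hn
    rw [Real.dist_eq, sub_zero] at h1 ⊢
    have h2 : |g n (x - y)| ≤ ε / 2 := by
      calc |g n (x - y)| ≤ ‖g n‖ * ‖x - y‖ := (g n).le_opNorm _
        _ ≤ (C + C + 1) * (ε / (2 * (C + C + 1))) := by
          refine mul_le_mul ((hgC n).trans (by linarith)) ?_ (norm_nonneg _) (by linarith)
          rw [← dist_eq_norm]; exact hxy.le
        _ = ε / 2 := by field_simp
    calc |g n x| = |g n (x - y) + g n y| := by rw [map_sub]; ring_nf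
      _ ≤ |g n (x - y)| + |g n y| := abs_add_le _ _
      _ < ε := by linarith
  have hXM : ∀ w : c, X w ∈ M := by
    intro w
    have h := tendsto_pi_nhds.1 hlim w
    have h' := (h.comp (tendsto_add_atTop_nat 1)).sub h
    rw [sub_self] at h'
    exact h'
  intro x
  by_contra hx
  obtain ⟨F, hFM, hFx⟩ := exists_functional_vanishing M hMclosed (x := x) hx
  -- bipolar argument: `F` kills the common kernel of the `z n`, so reflexivity puts it in `Z`
  have hFZ : F ∈ Z := by
    by_contra hF
    obtain ⟨Φ, hΦ, hΦF⟩ :=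
      exists_functional_vanishing Z (Submodule.isClosed_topologicalClosure _) hF
    obtain ⟨v, rfl⟩ := hrefl Φ
    have hv : ∀ n, z n v = 0 := fun n => by
      simpa using hΦ (z n) (Submodule.le_topologicalClosure _
        (Submodule.subset_span (Set.mem_range_self n)))
    have hvM : v ∈ M := by
      change Tendsto (fun k => g k v) atTop (𝓝 0)
      simp [hg, hv]
    exact hΦF (by simpa using hFM v hvM)
  -- `F` vanishes on the norming vectors of a family that approximates it
  have hF0 : ‖F‖ ≤ 0 := by
    refine le_of_forall_pos_le_add fun ε hε => ?_
    obtain ⟨w, hw, hFw⟩ := Metric.mem_closure_iff.1 (hZc hFZ) (ε / 3) (by positivity)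
    rw [dist_comm, dist_eq_norm] at hFw
    have h1 : |w (X w)| ≤ ε / 3 := by
      have h0 : F (X w) = 0 := hFM _ (hXM ⟨w, hw⟩)
      calc |w (X w)| = |(w - F) (X w)| := by simp [h0]
        _ ≤ ‖w - F‖ * ‖X w‖ := (w - F).le_opNorm _
        _ ≤ ε / 3 * 1 := mul_le_mul hFw.le (hX1 _) (norm_nonneg _) (by positivity)
        _ = ε / 3 := mul_one _
    have h2 := hX2 w
    have h3 : ‖F‖ ≤ ‖w‖ + ‖w - F‖ := by
      simpa using norm_sub_le w (w - F)
    linarith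
  exact hFx (by simp [norm_le_zero_iff.1 hF0])

lemma czero_norm_le_s15 {f : czero} {r : ℝ} (hr : 0 ≤ r) (h : ∀ n, |f n| ≤ r) : ‖f‖ ≤ r := by
  rw [← ZeroAtInftyContinuousMap.norm_toBCF_eq_norm]
  exact (BoundedContinuousFunction.norm_le hr).2 h

lemma czero_abs_le_norm (f : czero) (n : ℕ) : |f n| ≤ ‖f‖ := by
  rw [← ZeroAtInftyContinuousMap.norm_toBCF_eq_norm]
  exact f.toBCF.norm_coe_le_norm n

/-- The operator into `c₀` whose coordinates are a pointwise null sequence of contractive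
functionals. -/
noncomputable def coordOperator {V : Type*} [NormedAddCommGroup V] [NormedSpace ℝ V]
    (f : ℕ → V →L[ℝ] ℝ) (hf : ∀ n, ‖f n‖ ≤ 1)
    (h0 : ∀ v, Tendsto (fun n => f n v) atTop (𝓝 0)) : V →L[ℝ] czero :=
  LinearMap.mkContinuous
    { toFun := fun v =>
        { toFun := fun n => f n v
          continuous_toFun := continuous_of_discreteTopology
          zero_at_infty' := by
            rw [cocompact_eq_cofinite, Nat.cofinite_eq_atTop]
            exact h0 v }
      map_add' := fun v w => by ext n; simp
      map_smul' := fun r v => by ext n; simp } 1 (fun v => by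
        rw [one_mul]
        refine czero_norm_le_s15 (norm_nonneg _) fun n => ?_
        exact ((f n).le_opNorm v).trans (mul_le_of_le_one_left (norm_nonneg _) (hf n)))

lemma coordOperator_apply {V : Type*} [NormedAddCommGroup V] [NormedSpace ℝ V]
    (f : ℕ → V →L[ℝ] ℝ) (hf : ∀ n, ‖f n‖ ≤ 1)
    (h0 : ∀ v, Tendsto (fun n => f n v) atTop (𝓝 0)) (v : V) (n : ℕ) :
    coordOperator f hf h0 v n = f n v := rfl

/-- If the dual of `Y` carries a pointwise null sequence bounded away from `0` in norm, then
`ℝ × Y` with the maximum norm fails the weak maximizing property into `c₀`. -/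
lemma exists_operator_prod {Y : Type*} [NormedAddCommGroup Y] [NormedSpace ℝ Y]
    (g : ℕ → Y →L[ℝ] ℝ) (hg1 : ∀ n, 1 ≤ ‖g n‖)
    (hg0 : ∀ y, Tendsto (fun n => g n y) atTop (𝓝 0)) :
    ∃ S : (ℝ × Y) →L[ℝ] czero,
      (∃ x : ℕ → ℝ × Y, MaximizingSeq S x ∧ ¬ WeaklyNull x) ∧ ¬ AttainsNorm S := by
  -- strictly increasing weights in `[1/2, 1)` tending to `1`
  set c : ℕ → ℝ := fun n => 1 - 1 / ((n : ℝ) + 2) with hc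
  have hc1 : ∀ n, c n < 1 := fun n => by
    have : (0 : ℝ) < 1 / ((n : ℝ) + 2) := by positivity
    simp only [hc]; linarith
  have hchalf : ∀ n, 1 / 2 ≤ c n := fun n => by
    have : 1 / ((n : ℝ) + 2) ≤ 1 / 2 :=
      one_div_le_one_div_of_le (by norm_num) (by linarith [n.cast_nonneg (α := ℝ)])
    simp only [hc]; linarith
  have hc0 : ∀ n, 0 < c n := fun n => by linarith [hchalf n]
  have hcmono : Monotone c := fun m n hmn => by
    have : 1 / ((n : ℝ) + 2) ≤ 1 / ((m : ℝ) + 2) :=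
      one_div_le_one_div_of_le (by positivity) (by gcongr)
    simp only [hc]; linarith
  have hclim : Tendsto c atTop (𝓝 1) := by
    have h : Tendsto (fun n : ℕ => 1 / ((n : ℝ) + 2)) atTop (𝓝 0) := by
      have h' : Tendsto (fun n : ℕ => (n : ℝ) + 2) atTop atTop :=
        tendsto_atTop_add_const_right _ _ tendsto_natCast_atTop_atTop
      simp only [one_div]
      exact h'.inv_tendsto_atTop
    simpa [hc] using (tendsto_const_nhds (x := (1 : ℝ))).sub h
  have hgpos : ∀ n, 0 < ‖g n‖ := fun n => one_pos.trans_le (hg1 n)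
  set f : ℕ → (ℝ × Y) →L[ℝ] ℝ := fun n =>
    (c n / ‖g n‖) • (g n).comp (ContinuousLinearMap.snd ℝ ℝ Y) with hf
  have hfapp : ∀ n v, f n v = c n / ‖g n‖ * g n v.2 := fun n v => rfl
  have hfbd : ∀ n v, |f n v| ≤ c n * ‖v‖ := by
    intro n v
    rw [hfapp, abs_mul, abs_of_pos (div_pos (hc0 n) (hgpos n))]
    calc c n / ‖g n‖ * |g n v.2| ≤ c n / ‖g n‖ * (‖g n‖ * ‖v‖) := by
          refine mul_le_mul_of_nonneg_left ?_ (div_pos (hc0 n) (hgpos n)).le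
          exact ((g n).le_opNorm v.2).trans
            (mul_le_mul_of_nonneg_left (norm_snd_le v) (norm_nonneg _))
      _ = c n * ‖v‖ := by
          have := (hgpos n).ne'
          field_simp
  have hf1 : ∀ n, ‖f n‖ ≤ 1 := fun n =>
    ((f n).opNorm_le_bound (hc0 n).le (hfbd n)).trans (hc1 n).le
  have hf0 : ∀ v, Tendsto (fun n => f n v) atTop (𝓝 0) := by
    intro v
    refine squeeze_zero_norm (fun n => ?_) (by simpa using (hg0 v.2).abs)
    rw [Real.norm_eq_abs, hfapp, abs_mul, abs_of_pos (div_pos (hc0 n) (hgpos n))]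
    refine mul_le_of_le_one_left (abs_nonneg _) ?_
    rw [div_le_one (hgpos n)]
    exact (hc1 n).le.trans (hg1 n)
  set S := coordOperator f hf1 hf0 with hS
  have hSapp : ∀ v n, S v n = f n v := coordOperator_apply f hf1 hf0
  have hSle : ‖S‖ ≤ 1 := LinearMap.mkContinuous_norm_le _ zero_le_one _
  -- almost norming vectors for the `g n`; the first coordinate `1` costs nothing in norm
  have hy : ∀ n, ∃ y : Y, ‖y‖ < 1 ∧ c n * ‖g n‖ < ‖g n y‖ := fun n =>
    (g n).exists_lt_apply_of_lt_opNorm (mul_lt_of_lt_one_left (hgpos n) (hc1 n))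
  choose y hy1 hy2 using hy
  have hxnorm : ∀ n, ‖((1 : ℝ), y n)‖ = 1 := fun n => by
    rw [Prod.norm_mk, norm_one]
    exact max_eq_left (hy1 n).le
  have hlow : ∀ n, c n * c n ≤ ‖S (1, y n)‖ := by
    intro n
    refine le_trans ?_ (czero_abs_le_norm _ n)
    rw [hSapp, hfapp, abs_mul, abs_of_pos (div_pos (hc0 n) (hgpos n))]
    calc c n * c n = c n / ‖g n‖ * (c n * ‖g n‖) := by
          have := (hgpos n).ne'
          field_simp
      _ ≤ c n / ‖g n‖ * |g n (y n)| :=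
          mul_le_mul_of_nonneg_left (hy2 n).le (div_pos (hc0 n) (hgpos n)).le
  have hup : ∀ n, ‖S (1, y n)‖ ≤ ‖S‖ := fun n => by
    simpa [hxnorm n] using S.le_opNorm (1, y n)
  have hcc : Tendsto (fun n => c n * c n) atTop (𝓝 1) := by simpa using hclim.mul hclim
  have hSnorm : ‖S‖ = 1 :=
    le_antisymm hSle (le_of_tendsto' hcc fun n => (hlow n).trans (hup n))
  refine ⟨S, ⟨fun n => (1, y n), ⟨hxnorm, ?_⟩, fun hw => ?_⟩, ?_⟩
  · rw [hSnorm]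
    exact tendsto_of_tendsto_of_tendsto_of_le_of_le hcc tendsto_const_nhds hlow
      fun n => hSnorm ▸ hup n
  · have h := hw (ContinuousLinearMap.fst ℝ ℝ Y)
    exact one_ne_zero (tendsto_nhds_unique tendsto_const_nhds h)
  · rintro ⟨v, hv, hSv⟩
    rw [hSnorm] at hSv
    -- beyond `N` all coordinates are at most `1/2`, so `c N < 1` bounds every coordinate
    obtain ⟨N, hN⟩ := Metric.tendsto_atTop.1 (hf0 v) (1 / 2) (by norm_num)
    have : ‖S v‖ ≤ c N := by
      refine czero_norm_le_s15 (hc0 N).le fun n => ?_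
      rw [hSapp]
      rcases le_total N n with h | h
      · have := hN n h
        rw [Real.dist_eq, sub_zero] at this
        exact this.le.trans (hchalf N)
      · have := hfbd n v
        rw [hv, mul_one] at this
        exact this.trans (hcmono h)
    linarith [hc1 N]

theorem statement15 {E : Type u} [NormedAddCommGroup E] [NormedSpace ℝ E] [CompleteSpace E]
    (hinf : ¬ FiniteDimensional ℝ E) (hrefl : ReflexiveSpace E) :
    ∃ (E' : Type u) (i1 : NormedAddCommGroup E'),
      letI := i1
      ∃ i2 : NormedSpace ℝ E',
        letI := i2
        CompleteSpace E' ∧ Nonempty (E ≃L[ℝ] E') ∧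
          ∃ S : E' →L[ℝ] czero,
            (∃ x : ℕ → E', MaximizingSeq S x ∧ ¬ WeaklyNull x) ∧ ¬ AttainsNorm S := by
  have : Nontrivial E := by
    by_contra h
    rw [not_nontrivial_iff_subsingleton] at h
    exact hinf inferInstance
  obtain ⟨e, he⟩ := exists_ne (0 : E)
  obtain ⟨p, hp⟩ := SeparatingDual.exists_eq_one (R := ℝ) he
  -- split off the line through `e`: `E ≃ ℝ × ker p`
  have hinv : Function.RightInverse (ContinuousLinearMap.toSpanSingleton ℝ e) p := fun t => by
    simp [hp]
  set Y := p.ker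
  let Ψ : E ≃L[ℝ] ℝ × Y := ContinuousLinearEquiv.equivOfRightInverse p _ hinv
  let P : E →L[ℝ] Y := p.projKerOfRightInverse _ hinv
  have hPY : ∀ y : Y, P y = y := fun y => p.projKerOfRightInverse_apply_idem _ hinv y
  have hYinf : ¬ FiniteDimensional ℝ Y := fun h =>
    hinf (Ψ.symm.toLinearEquiv.finiteDimensional)
  have hYdual : ¬ FiniteDimensional ℝ (Y →L[ℝ] ℝ) := fun h =>
    hYinf (FiniteDimensional.of_injective
      (NormedSpace.inclusionInDoubleDualLi (E := Y) ℝ).toLinearMap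
      (NormedSpace.inclusionInDoubleDualLi (E := Y) ℝ).injective)
  obtain ⟨R, w, -, hwR, hwsep⟩ := 
    exists_seq_norm_le_one_le_norm_sub (𝕜 := ℝ) (E := Y →L[ℝ] ℝ) hYdual
  -- extend the separated functionals to `E` by the projection, where reflexivity applies
  obtain ⟨φ, hφ, hlim⟩ := exists_subseq_diff_tendsto_zero hrefl (fun n => (w n).comp P)
    (R * ‖P‖) (fun n => ((w n).opNorm_comp_le P).trans
      (mul_le_mul_of_nonneg_right (hwR n) (norm_nonneg _)))
  have hYclosed : IsClosed (Y : Set E) := p.isClosed_ker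
  refine ⟨ℝ × Y, inferInstance, inferInstance, ?_, ⟨Ψ⟩, ?_⟩
  · have : CompleteSpace Y := hYclosed.completeSpace_coe
    infer_instance
  · refine exists_operator_prod (fun k => w (φ (k + 1)) - w (φ k))
      (fun k => hwsep (hφ k.lt_succ_self).ne') fun y => ?_
    simpa [hPY] using hlim y
end
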